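/- arXiv:0709.1129 — 10 statements merged into one kernel-verified Lean document; each statement's English description precedes it below -/
import Mathlib

section
/- Let n ≥ 1 and let U be a nonempty bounded open subset of ℝⁿ with the property that for every point x in the frontier of U and every r > 0 there is a connected component of U entirely contained in the open ball of center x and radius r. Then U has infinitely many connected components. -/
/-!
Since `U` is nonempty, bounded and open, it has a frontier point `x`, and `x ∉ U`. If `U` had only
finitely many components, one point chosen in each would give a finite set not containing `x`,
hence missing some ball around `x`; but that ball contains a whole component.
-/

/-- A nonempty bounded open set in ℝⁿ (n ≥ 1), each point of whose frontier has
connected components of `U` in arbitrarily small balls around it, has infinitely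
many connected components. -/
theorem stmt_0 (n : ℕ) (hn : 1 ≤ n) (U : Set (EuclideanSpace ℝ (Fin n)))
    (hUopen : IsOpen U) (hUne : U.Nonempty) (hUbdd : Bornology.IsBounded U)
    (h : ∀ x ∈ frontier U, ∀ r > 0,
      ∃ y ∈ U, connectedComponentIn U y ⊆ Metric.ball x r) :
    {K : Set (EuclideanSpace ℝ (Fin n)) | ∃ y ∈ U, K = connectedComponentIn U y}.Infinite := by
  intro hfin
  have : Nonempty (Fin n) := ⟨⟨0, hn⟩⟩
  have hUuniv : U ≠ Set.univ := by
    rintro rfl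
    exact NormedSpace.unbounded_univ ℝ (EuclideanSpace ℝ (Fin n)) hUbdd
  obtain ⟨x, hx⟩ : (frontier U).Nonempty := nonempty_frontier_iff.2 ⟨hUne, hUuniv⟩
  have hxU : x ∉ U := by
    rw [hUopen.frontier_eq] at hx
    exact hx.2
  have hex : ∀ K : Set (EuclideanSpace ℝ (Fin n)), ∃ p, K.Nonempty → p ∈ K := fun K => by
    rcases K.eq_empty_or_nonempty with rfl | ⟨p, hp⟩
    · exact ⟨0, fun hK => absurd hK Set.not_nonempty_empty⟩
    · exact ⟨p, fun _ => hp⟩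
  choose f hf using hex
  have hfmem : ∀ y ∈ U, f (connectedComponentIn U y) ∈ connectedComponentIn U y :=
    fun y hy => hf _ ⟨y, mem_connectedComponentIn hy⟩
  have hxf : x ∈ (f '' {K | ∃ y ∈ U, K = connectedComponentIn U y})ᶜ := by
    rintro ⟨_, ⟨y, hy, rfl⟩, rfl⟩
    exact hxU (connectedComponentIn_subset U y (hfmem y hy))
  obtain ⟨r, hr, hball⟩ := Metric.isOpen_iff.1 (hfin.image f).isClosed.isOpen_compl x hxf
  obtain ⟨y, hy, hyr⟩ := h x hx r hr
  exact hball (hyr (hfmem y hy)) ⟨_, ⟨y, hy, rfl⟩, rfl⟩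
end

section
/- Let n ≥ 2 and let E ⊆ ℝⁿ be a compact totally disconnected set. Then the complement ℝⁿ \ E is a connected set. -/
/-!
The plane case carries the proof. Let `K ⊆ ℂ` be compact and totally disconnected and suppose a
component `U` of `Kᶜ` is bounded, with `p ∈ U`. Since `K` splits into small clopen pieces, the
nonvanishing function `z - p` has a continuous logarithm on `K` (`exists_log_of_totallyDisconnected`),
which Tietze's theorem extends to a continuous `G : ℂ → ℂ`. As `∂U ⊆ K`, the function equal to
`exp G` on `U` and to `z - p` off `U` is continuous and never zero on `ℂ`, so it has a continuous
logarithm on the simply connected space `ℂ`. Restricted to a large circle this is a continuous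
logarithm of `z - p`, which does not exist (`not_exists_log_sub_off_compact`). Hence every component
of `Kᶜ` is unbounded (`exists_mem_connectedComponentIn_notMem`).

In `ℝⁿ` with `n ≥ 2`, the plane case applied in an affine plane through `p ∉ E` joins `p` inside `Eᶜ`
to the exterior of a ball containing `E`, and that exterior is connected.
-/

/-- On a compact totally disconnected space every nonvanishing continuous complex function has a
continuous logarithm: logarithms exist locally, on clopen sets, and clopen domains can be made
disjoint. -/
lemma exists_log_of_totallyDisconnected {X : Type*} [TopologicalSpace X] [CompactSpace X]
    [T2Space X] [TotallyDisconnectedSpace X] {f : X → ℂ} (hf : Continuous f) (h0 : ∀ x, f x ≠ 0) :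
    ∃ g : X → ℂ, Continuous g ∧ ∀ x, Complex.exp (g x) = f x := by
  have key : ∃ C : Set X, IsClopen C ∧ Set.univ ⊆ C ∧
      ∃ g : X → ℂ, Continuous g ∧ ∀ x ∈ C, Complex.exp (g x) = f x := by
    refine isCompact_univ.induction_on
      (p := fun s => ∃ C : Set X, IsClopen C ∧ s ⊆ C ∧
        ∃ g : X → ℂ, Continuous g ∧ ∀ x ∈ C, Complex.exp (g x) = f x) ?_ ?_ ?_ ?_
    · exact ⟨∅, isClopen_empty, subset_rfl, fun _ => 0, continuous_const, by simp⟩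
    · rintro s t hst ⟨C, hC, htC, hg⟩
      exact ⟨C, hC, hst.trans htC, hg⟩
    · classical
      rintro s t ⟨C, hC, hsC, g, hg, hgf⟩ ⟨D, hD, htD, k, hk, hkf⟩
      refine ⟨C ∪ D, hC.union hD, Set.union_subset_union hsC htD, C.piecewise g k, ?_, ?_⟩
      · refine hg.piecewise ?_ hk
        simp [hC.frontier_eq]
      · intro x hx
        by_cases hxC : x ∈ C
        · simpa [hxC] using hgf x hxC
        · simpa [hxC] using hkf x (hx.resolve_left hxC)
    · intro x _
      -- Near `x` the quotient `f y / f x` lies in the slit plane, where `Complex.log` is continuous.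
      have hq : Continuous fun y => f y / f x := hf.div_const _
      have hopen : IsOpen ((fun y => f y / f x) ⁻¹' Complex.slitPlane) :=
        Complex.isOpen_slitPlane.preimage hq
      have hmem : x ∈ (fun y => f y / f x) ⁻¹' Complex.slitPlane := by
        simp [div_self (h0 x)]
      obtain ⟨C, hC, hxC, hCs⟩ := compact_exists_isClopen_in_isOpen hopen hmem
      refine ⟨C, mem_nhdsWithin_of_mem_nhds (hC.isOpen.mem_nhds hxC), C, hC, subset_rfl, ?_⟩
      classical
      refine ⟨C.piecewise (fun y => Complex.log (f x) + Complex.log (f y / f x)) (fun _ => 0),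
        ?_, ?_⟩
      · rw [continuous_iff_continuousAt]
        intro y
        by_cases hy : y ∈ C
        · have h1 : ContinuousAt (fun y => Complex.log (f x) + Complex.log (f y / f x)) y :=
            continuousAt_const.add (hq.continuousAt.clog (hCs hy))
          refine h1.congr ?_
          filter_upwards [hC.isOpen.mem_nhds hy] with z hz
          simp [hz]
        · refine (continuousAt_const (y := (0 : ℂ))).congr ?_
          filter_upwards [hC.compl.isOpen.mem_nhds hy] with z hz
          rw [Set.piecewise_eq_of_notMem _ _ _ hz]
      · intro y hy
        rw [Set.piecewise_eq_of_mem _ _ _ hy, Complex.exp_add, Complex.exp_log (h0 x),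
          Complex.exp_log (div_ne_zero (h0 y) (h0 x)), mul_div_cancel₀ _ (h0 x)]
  obtain ⟨C, -, hC, g, hg, hgf⟩ := key
  exact ⟨g, hg, fun x => hgf x (hC trivial)⟩

/-- The function `z - p` has winding number one on large circles, so it has no continuous logarithm
there. -/
lemma not_exists_log_sub_off_compact {p : ℂ} {B : Set ℂ} (hB : IsCompact B) {L : ℂ → ℂ}
    (hL : Continuous L) (h : ∀ z ∉ B, Complex.exp (L z) = z - p) : False := by
  obtain ⟨r, hr0, hr⟩ := hB.isBounded.subset_closedBall_lt 0 p
  have hcirc : ∀ θ : ℝ, p + (r + 1 : ℝ) * Complex.exp (θ * Complex.I) ∉ B := by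
    intro θ hθ
    have := hr hθ
    rw [Metric.mem_closedBall, dist_eq_norm, add_sub_cancel_left, norm_mul,
      Complex.norm_exp_ofReal_mul_I, Complex.norm_real, Real.norm_eq_abs,
      abs_of_pos (by linarith)] at this
    linarith
  -- `φ` lifts a constant through the covering map `exp`, so it is constant; but `L` returns to its
  -- value after a full turn while the second term changes by `2πi`.
  let φ : ℝ → ℂ := fun θ =>
    L (p + (r + 1 : ℝ) * Complex.exp (θ * Complex.I)) - θ * Complex.I
  have hφ : Continuous φ := by fun_prop
  have hexp : ∀ θ, Complex.exp (φ θ) = (r + 1 : ℝ) := by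
    intro θ
    simp only [φ]
    rw [Complex.exp_sub, h _ (hcirc θ), add_sub_cancel_left,
      mul_div_cancel_right₀ _ (Complex.exp_ne_zero _)]
  have hconst : φ = fun _ => φ 0 := by
    refine Complex.isCoveringMap_exp.eq_of_comp_eq hφ continuous_const ?_ 0 rfl
    funext θ
    exact Subtype.ext ((hexp θ).trans (hexp 0).symm)
  have h2 := congrFun hconst (2 * Real.pi)
  simp only [φ] at h2
  push_cast at h2
  rw [Complex.exp_two_pi_mul_I] at h2
  simp at h2

/-- Every component of the complement of a compact totally disconnected plane set is unbounded. -/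
lemma exists_mem_connectedComponentIn_notMem {K B : Set ℂ} (hK : IsCompact K)
    (htd : IsTotallyDisconnected K) (hB : IsCompact B) {p : ℂ} (hp : p ∉ K) :
    ∃ w ∈ connectedComponentIn Kᶜ p, w ∉ B := by
  classical
  by_contra! hUB
  set U := connectedComponentIn Kᶜ p with hU
  have hpU : p ∈ U := mem_connectedComponentIn hp
  have hUo : IsOpen U := hK.isClosed.isOpen_compl.connectedComponentIn
  have hfr : frontier U ⊆ K := by
    intro x hx
    by_contra hxK
    have hV : IsOpen (connectedComponentIn Kᶜ x) :=
      hK.isClosed.isOpen_compl.connectedComponentIn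
    have hxV : x ∈ connectedComponentIn Kᶜ x := mem_connectedComponentIn hxK
    obtain ⟨y, hyV, hyU⟩ := mem_closure_iff.1 hx.1 _ hV hxV
    have hxU : x ∈ U := by
      rw [hU, connectedComponentIn_eq hyU, ← connectedComponentIn_eq hyV]
      exact hxV
    rw [hUo.frontier_eq] at hx
    exact hx.2 hxU
  have : CompactSpace K := isCompact_iff_compactSpace.1 hK
  have : TotallyDisconnectedSpace K := totallyDisconnectedSpace_subtype_iff.2 htd
  obtain ⟨g, hg, hgf⟩ := exists_log_of_totallyDisconnected (X := K) (f := fun z => (z : ℂ) - p)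
    (by fun_prop) (fun z hz => hp (by rw [← sub_eq_zero.1 hz]; exact z.2))
  obtain ⟨G, hG⟩ := ContinuousMap.exists_extension' hK.isClosed.isClosedEmbedding_subtypeVal
    (⟨g, hg⟩ : C(K, ℂ))
  have hGK : ∀ z ∈ K, Complex.exp (G z) = z - p := by
    intro z hz
    rw [show G z = g ⟨z, hz⟩ from congrFun hG ⟨z, hz⟩]
    exact hgf ⟨z, hz⟩
  let H : ℂ → ℂ := U.piecewise (fun z => Complex.exp (G z)) (fun z => z - p)
  have hH : Continuous H :=
    Continuous.piecewise (fun z hz => hGK z (hfr hz)) (by fun_prop) (by fun_prop)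
  have hH0 : ∀ z, H z ≠ 0 := by
    intro z
    by_cases hz : z ∈ U
    · simp [H, hz, Complex.exp_ne_zero]
    · simp only [H, Set.piecewise_eq_of_notMem _ _ _ hz]
      exact fun h => hz (sub_eq_zero.1 h ▸ hpU)
  have hsc : IsSimplyConnected (Set.univ : Set ℂ) := by
    have : ContractibleSpace (Set.univ : Set ℂ) :=
      convex_univ.contractibleSpace Set.univ_nonempty
    exact inferInstanceAs (SimplyConnectedSpace (Set.univ : Set ℂ))
  obtain ⟨L, hL, hLH⟩ := Complex.exists_continuousOn_eqOn_exp_comp hsc isOpen_univ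
    hH.continuousOn (fun ⟨z, _, hz⟩ => hH0 z hz)
  refine not_exists_log_sub_off_compact hB (continuousOn_univ.1 hL) (p := p) fun z hz => ?_
  have hzU : z ∉ U := fun h => hz (hUB z h)
  simpa [H, hzU] using hLH (Set.mem_univ z)

lemma isPreconnected_compl_closedBall_zero {F : Type*} [NormedAddCommGroup F] [NormedSpace ℝ F]
    (h : 1 < Module.rank ℝ F) {R : ℝ} (hR : 0 ≤ R) :
    IsPreconnected (Metric.closedBall (0 : F) R)ᶜ := by
  have himg : (fun q : ℝ × F => q.1 • q.2) '' (Set.Ioi R ×ˢ Metric.sphere (0 : F) 1) =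
      (Metric.closedBall (0 : F) R)ᶜ := by
    ext x
    simp only [Set.mem_image, Set.mem_prod, Set.mem_Ioi, mem_sphere_zero_iff_norm,
      Set.mem_compl_iff, mem_closedBall_zero_iff, not_le, Prod.exists]
    constructor
    · rintro ⟨t, y, ⟨ht, hy⟩, rfl⟩
      rwa [norm_smul, hy, mul_one, Real.norm_eq_abs, abs_of_pos (hR.trans_lt ht)]
    · intro hx
      have hx0 : ‖x‖ ≠ 0 := (hR.trans_lt hx).ne'
      exact ⟨‖x‖, ‖x‖⁻¹ • x, ⟨hx, by simp [norm_smul, hx0]⟩, smul_inv_smul₀ hx0 x⟩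
  rw [← himg]
  exact (isPreconnected_Ioi.prod (isPreconnected_sphere h 0 1)).image _ (by fun_prop)

/-- For `n ≥ 2`, the complement of a compact totally disconnected subset of ℝⁿ is
connected. -/
theorem stmt_2 (n : ℕ) (hn : 2 ≤ n) (E : Set (EuclideanSpace ℝ (Fin n)))
    (hcomp : IsCompact E) (htd : IsTotallyDisconnected E) :
    IsConnected Eᶜ := by
  have hrank : 1 < Module.rank ℝ (EuclideanSpace ℝ (Fin n)) := by
    rw [← Module.finrank_eq_rank, finrank_euclideanSpace_fin]
    exact_mod_cast hn
  have : Nontrivial (EuclideanSpace ℝ (Fin n)) :=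
    (rank_pos_iff_nontrivial (R := ℝ)).1 (zero_lt_one.trans hrank)
  obtain ⟨T, hT⟩ : ∃ T : ℂ →ₗ[ℝ] EuclideanSpace ℝ (Fin n), Function.Injective T := by
    rw [← rank_le_iff_exists_linearMap, Complex.rank_real_complex, ← Module.finrank_eq_rank,
      finrank_euclideanSpace_fin]
    exact_mod_cast hn
  obtain ⟨R, hR0, hR⟩ := hcomp.isBounded.subset_closedBall_lt 0 0
  set W := (Metric.closedBall (0 : EuclideanSpace ℝ (Fin n)) R)ᶜ with hW
  have hWE : W ⊆ Eᶜ := Set.compl_subset_compl.2 hR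
  have hWc : IsPreconnected W := isPreconnected_compl_closedBall_zero hrank hR0.le
  obtain ⟨w₀, hw₀⟩ : W.Nonempty := by
    obtain ⟨x, hx⟩ := NormedSpace.exists_lt_norm ℝ (EuclideanSpace ℝ (Fin n)) R
    exact ⟨x, by simpa [hW] using hx⟩
  refine ⟨⟨w₀, hWE hw₀⟩, isPreconnected_of_forall w₀ fun p hp => ?_⟩
  let ι : ℂ → EuclideanSpace ℝ (Fin n) := fun z => p + T z
  have hι : Topology.IsClosedEmbedding ι :=
    (Homeomorph.addLeft p).isClosedEmbedding.comp
      (LinearMap.isClosedEmbedding_of_injective (LinearMap.ker_eq_bot.2 hT))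
  have hKtd : IsTotallyDisconnected (ι ⁻¹' E) := fun t ht htc =>
    Set.subsingleton_of_image hι.injective t
      (htd _ (Set.image_subset_iff.2 ht) (htc.image _ hι.continuous.continuousOn))
  have h0 : ι 0 = p := by simp [ι]
  obtain ⟨w, hw, hwB⟩ := exists_mem_connectedComponentIn_notMem (hι.isCompact_preimage hcomp) hKtd
    (hι.isCompact_preimage (isCompact_closedBall 0 R)) (p := 0) (by simpa [h0] using hp)
  set C := connectedComponentIn (ι ⁻¹' E)ᶜ 0
  have hCp : p ∈ ι '' C := ⟨0, mem_connectedComponentIn (by simpa [h0] using hp), h0⟩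
  have hCc : IsPreconnected (ι '' C) :=
    isPreconnected_connectedComponentIn.image _ hι.continuous.continuousOn
  have hCE : ι '' C ⊆ Eᶜ := Set.image_subset_iff.2 (connectedComponentIn_subset _ _)
  exact ⟨ι '' C ∪ W, Set.union_subset hCE hWE, Or.inr hw₀, Or.inl hCp,
    hCc.union (ι w) ⟨w, hw, rfl⟩ hwB hWc⟩
end

section
/- Let U be a nonempty bounded open subset of ℝⁿ and let f : ℝⁿ → ℂ be continuous with f(x) = 0 for every x in the frontier of U. For each connected component K of U, let a_K = (vol K)⁻¹ ∫_K f dvol denote the average of f over K (each component is nonempty, open, and bounded, hence has positive finite Lebesgue measure). Then for every ε > 0, the set of connected components K of U with ‖a_K‖ ≥ ε is finite. -/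
/-!
The set `C = {x ∈ closure U | ε / 2 ≤ ‖f x‖}` is compact, and it lies in `U` because `f` vanishes on
the frontier. The components of `U` are open and disjoint, so only finitely many of them meet `C`.
On a component missing `C` one has `‖f‖ < ε / 2`, so the average there has norm at most `ε / 2 < ε`.
-/

open MeasureTheory

/-- If `f` is continuous and vanishes on the frontier of a nonempty bounded open set
`U ⊆ ℝⁿ`, then for every `ε > 0` only finitely many connected components `K` of `U`
have average of `f` over `K` of norm at least `ε`. -/
theorem stmt_5 (n : ℕ) (U : Set (EuclideanSpace ℝ (Fin n)))
    (hUopen : IsOpen U) (hUne : U.Nonempty) (hUbdd : Bornology.IsBounded U)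
    (f : EuclideanSpace ℝ (Fin n) → ℂ) (hf : Continuous f)
    (hf0 : ∀ x ∈ frontier U, f x = 0) :
    ∀ ε > (0 : ℝ),
      {K : Set (EuclideanSpace ℝ (Fin n)) |
        (∃ y ∈ U, K = connectedComponentIn U y) ∧
          ε ≤ ‖(volume K).toReal⁻¹ • ∫ x in K, f x ∂volume‖}.Finite := by
  intro ε hε
  have hC : IsCompact (closure U ∩ {x | ε / 2 ≤ ‖f x‖}) :=
    hUbdd.isCompact_closure.inter_right (isClosed_le continuous_const hf.norm)
  have hCU : closure U ∩ {x | ε / 2 ≤ ‖f x‖} ⊆ U := by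
    rintro x ⟨hx, hfx⟩
    by_contra hxU
    have h0 : f x = 0 := hf0 x (by rw [hUopen.frontier_eq]; exact ⟨hx, hxU⟩)
    simp only [Set.mem_setOf_eq, h0, norm_zero] at hfx
    linarith
  obtain ⟨t, -, htC⟩ := hC.elim_nhds_subcover (fun x => connectedComponentIn U x)
    (fun x hx => hUopen.connectedComponentIn.mem_nhds (mem_connectedComponentIn (hCU hx)))
  refine (t.finite_toSet.image fun x => connectedComponentIn U x).subset ?_
  rintro K ⟨⟨y, hy, rfl⟩, hK⟩
  -- A component with a large average contains a point `x` of the compact set.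
  obtain ⟨x, hxK, hfx⟩ : ∃ x ∈ connectedComponentIn U y, ε / 2 ≤ ‖f x‖ := by
    by_contra! hsmall
    have hfin : volume (connectedComponentIn U y) < ⊤ :=
      (hUbdd.subset (connectedComponentIn_subset U y)).measure_lt_top
    have hpos : 0 < (volume (connectedComponentIn U y)).toReal :=
      ENNReal.toReal_pos (hUopen.connectedComponentIn.measure_pos volume
        ⟨y, mem_connectedComponentIn hy⟩).ne' hfin.ne
    have hint := norm_setIntegral_le_of_norm_le_const hfin (fun x hx => (hsmall x hx).le)
    rw [norm_smul, norm_inv, Real.norm_of_nonneg hpos.le, le_inv_mul_iff₀ hpos] at hK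
    rw [measureReal_def] at hint
    nlinarith
  have hxU : x ∈ U := connectedComponentIn_subset U y hxK
  obtain ⟨z, hz, hxz⟩ := Set.mem_iUnion₂.1 (htC ⟨subset_closure hxU, hfx⟩)
  exact ⟨z, hz, (connectedComponentIn_eq hxz).trans (connectedComponentIn_eq hxK).symm⟩
end

section
/- Let U be a nonempty bounded open subset of ℝⁿ and let f : ℝⁿ → ℂ be continuous with f(x) ≠ 0 for every x in the frontier of U. Then there exists δ > 0 such that the set of connected components K of U containing some point x with ‖f(x)‖ < δ is finite. -/
/-!
The frontier of `U` is compact, so `‖f‖ ≥ ε` there for some `ε > 0`. Hence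
`C = closure U ∩ {‖f‖ ≤ ε / 2}` is a compact set missing the frontier, that is, a compact subset
of `U`. The connected components of `U` are open and cover `C`, so finitely many of them do, and
by disjointness these are the only components meeting `C`. Thus `δ = ε / 2` works.
-/

/-- If `f` is continuous and nonvanishing on the frontier of a nonempty bounded open
set `U ⊆ ℝⁿ`, then there is `δ > 0` such that only finitely many connected components
of `U` contain a point where `‖f‖ < δ`. -/
theorem stmt_6 (n : ℕ) (U : Set (EuclideanSpace ℝ (Fin n)))
    (hUopen : IsOpen U) (hUne : U.Nonempty) (hUbdd : Bornology.IsBounded U)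
    (f : EuclideanSpace ℝ (Fin n) → ℂ) (hf : Continuous f)
    (hf0 : ∀ x ∈ frontier U, f x ≠ 0) :
    ∃ δ > (0 : ℝ),
      {K : Set (EuclideanSpace ℝ (Fin n)) |
        (∃ y ∈ U, K = connectedComponentIn U y) ∧ ∃ x ∈ K, ‖f x‖ < δ}.Finite := by
  have hcl : IsCompact (closure U) := hUbdd.isCompact_closure
  have hfr : IsCompact (frontier U) :=
    hcl.of_isClosed_subset isClosed_frontier frontier_subset_closure
  obtain ⟨ε, hε, hεf⟩ := hfr.exists_forall_le' (f := fun x => ‖f x‖) (a := 0)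
    hf.norm.continuousOn (fun x hx => norm_pos_iff.2 (hf0 x hx))
  have hC : IsCompact (closure U ∩ {x | ‖f x‖ ≤ ε / 2}) :=
    hcl.inter_right (isClosed_le hf.norm continuous_const)
  have hCU : closure U ∩ {x | ‖f x‖ ≤ ε / 2} ⊆ U := by
    rintro x ⟨hx, hxε⟩
    by_contra hxU
    have h : ε ≤ ‖f x‖ := hεf x ⟨hx, by rwa [hUopen.interior_eq]⟩
    have hxε' : ‖f x‖ ≤ ε / 2 := hxε
    linarith
  obtain ⟨t, -, ht⟩ := hC.elim_nhds_subcover (fun x => connectedComponentIn U x) fun x hx =>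
    hUopen.connectedComponentIn.mem_nhds (mem_connectedComponentIn (hCU hx))
  refine ⟨ε / 2, half_pos hε, (t.finite_toSet.image (connectedComponentIn U)).subset ?_⟩
  rintro K ⟨⟨y, hy, rfl⟩, x, hx, hxδ⟩
  obtain ⟨z, hz, hxz⟩ := Set.mem_iUnion₂.1
    (ht ⟨subset_closure (connectedComponentIn_subset U y hx), hxδ.le⟩)
  exact ⟨z, hz, (connectedComponentIn_eq hxz).trans (connectedComponentIn_eq hx).symm⟩
end

section
/- Let U be an open subset of ℂ and let f : ℂ → ℂ be continuous on U and complex differentiable at every point of U whose imaginary part is nonzero (i.e., f is complex differentiable on U \ ℝ). Then f is complex differentiable at every point of U. -/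
/-!
By Morera's theorem (`Complex.isConservativeOn_and_continuousOn_iff_isDifferentiableOn`) it
suffices that the integral of `f` around every closed rectangle in `U` vanishes. If the interior of
the rectangle misses the real axis, this is the Cauchy–Goursat theorem for functions continuous on
the closed rectangle and holomorphic in its interior. Otherwise the real axis cuts the rectangle
into two rectangles of the first kind, and the contributions of the common edge cancel.
-/

/-- The integral of `f` along the boundary of the rectangle with opposite corners `a + c * I` and
`b + d * I`. -/
noncomputable def rectBoundaryIntegral (f : ℂ → ℂ) (a b c d : ℝ) : ℂ :=
  (∫ x : ℝ in a..b, f (x + c * Complex.I)) - (∫ x : ℝ in a..b, f (x + d * Complex.I)) +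
    Complex.I * (∫ y : ℝ in c..d, f (b + y * Complex.I)) -
    Complex.I * (∫ y : ℝ in c..d, f (a + y * Complex.I))

lemma rectBoundaryIntegral_eq_zero_of_not_mem_Ioo {f : ℂ → ℂ} {U : Set ℂ} (hU : IsOpen U)
    (hf : ContinuousOn f U) (hd : DifferentiableOn ℂ f (U \ {z : ℂ | z.im = 0})) {a b c d : ℝ}
    (hsub : Set.uIcc a b ×ℂ Set.uIcc c d ⊆ U) (h0 : (0 : ℝ) ∉ Set.Ioo (min c d) (max c d)) :
    rectBoundaryIntegral f a b c d = 0 := by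
  have hopen : IsOpen (U \ {z : ℂ | z.im = 0}) :=
    hU.sdiff (isClosed_eq Complex.continuous_im continuous_const)
  have key := Complex.integral_boundary_rect_eq_zero_of_continuousOn_of_differentiableOn f
    (⟨a, c⟩ : ℂ) (⟨b, d⟩ : ℂ) (hf.mono hsub) (hd.mono ?_)
  · simpa [rectBoundaryIntegral] using key
  · intro z hz
    refine ⟨hsub ⟨Set.Ioo_subset_Icc_self hz.1, Set.Ioo_subset_Icc_self hz.2⟩, fun h => h0 ?_⟩
    have h' : z.im = 0 := h
    exact h' ▸ hz.2

lemma rectBoundaryIntegral_eq_zero {f : ℂ → ℂ} {U : Set ℂ} (hU : IsOpen U)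
    (hf : ContinuousOn f U) (hd : DifferentiableOn ℂ f (U \ {z : ℂ | z.im = 0})) {a b c d : ℝ}
    (hsub : Set.uIcc a b ×ℂ Set.uIcc c d ⊆ U) : rectBoundaryIntegral f a b c d = 0 := by
  by_cases h0 : (0 : ℝ) ∈ Set.Ioo (min c d) (max c d)
  swap
  · exact rectBoundaryIntegral_eq_zero_of_not_mem_Ioo hU hf hd hsub h0
  have hmem : (0 : ℝ) ∈ Set.uIcc c d := Set.Ioo_subset_Icc_self h0
  have hc : Set.uIcc c 0 ⊆ Set.uIcc c d := Set.uIcc_subset_uIcc_left hmem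
  have hd' : Set.uIcc 0 d ⊆ Set.uIcc c d := Set.uIcc_subset_uIcc_right hmem
  have hint : ∀ x ∈ Set.uIcc a b, ∀ p q : ℝ, Set.uIcc p q ⊆ Set.uIcc c d →
      IntervalIntegrable (fun y : ℝ => f (x + y * Complex.I)) MeasureTheory.volume p q := by
    intro x hx p q hpq
    refine (hf.comp (by fun_prop) fun y hy => hsub ⟨?_, ?_⟩).intervalIntegrable
    · simpa using hx
    · simpa using hpq hy
  have h1 : rectBoundaryIntegral f a b c 0 = 0 :=
    rectBoundaryIntegral_eq_zero_of_not_mem_Ioo hU hf hd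
      (fun z hz => hsub ⟨hz.1, hc hz.2⟩) (by simpa using le_of_lt)
  have h2 : rectBoundaryIntegral f a b 0 d = 0 :=
    rectBoundaryIntegral_eq_zero_of_not_mem_Ioo hU hf hd
      (fun z hz => hsub ⟨hz.1, hd' hz.2⟩) (by simpa using le_of_lt)
  have ea := intervalIntegral.integral_add_adjacent_intervals
    (hint a Set.left_mem_uIcc c 0 hc) (hint a Set.left_mem_uIcc 0 d hd')
  have eb := intervalIntegral.integral_add_adjacent_intervals
    (hint b Set.right_mem_uIcc c 0 hc) (hint b Set.right_mem_uIcc 0 d hd')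
  unfold rectBoundaryIntegral at h1 h2 ⊢
  rw [← ea, ← eb]
  linear_combination h1 + h2

/-- A function continuous on an open set `U ⊆ ℂ` and complex differentiable on
`U \ ℝ` is complex differentiable at every point of `U`. -/
theorem stmt_9 (U : Set ℂ) (hU : IsOpen U) (f : ℂ → ℂ)
    (hf : ContinuousOn f U)
    (hd : DifferentiableOn ℂ f (U \ {z : ℂ | z.im = 0})) :
    DifferentiableOn ℂ f U := by
  refine (Complex.isConservativeOn_and_continuousOn_iff_isDifferentiableOn hU).1 ⟨?_, hf⟩
  intro z w hzw
  rw [← add_eq_zero_iff_eq_neg, Complex.wedgeIntegral_add_wedgeIntegral_eq]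
  simpa [rectBoundaryIntegral] using rectBoundaryIntegral_eq_zero hU hf hd hzw
end

section
/- Let U be an open subset of ℂ, let E ⊆ ℂ be a set whose one-dimensional Hausdorff measure is zero, and let f : ℂ → ℂ be continuous on U and complex differentiable at every point of U \ E (differentiability within U \ E). Then f is complex differentiable at every point of U. -/
/-!
Since `E` has zero length its complement is dense, so by continuity a derivative of `f` within
`U \ E` is a derivative in the full sense (`differentiableAt_of_dense`). By Morera's theorem it then
suffices that the integral of `f` over the boundary of each rectangle in a small disc vanishes
(`rectIntegral_eq_zero`). `E` is not assumed closed; the proof is a Goursat bisection.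

Fix a `p × q` rectangle and `ε > 0`, and cover `E` by discs of radii `d j` with `∑ d j ≤ ε`. Let `μ`
be the measure `K ε · area` plus, for each `j`, the area restricted to a square of side `6 d j`
around the `j`-th disc with weight of order `1 / d j` (`coverMeasure`). The total mass that `μ`
gives the rectangle is `O(ε)`. The claim is `‖∮_{∂Q} f‖ ≤ μ Q` for the original rectangle `Q`. The
boundary integral is additive and `μ` is additive on half-open rectangles, so this inequality passes
from four quarters to the whole, and by bisection (`bisection`) it is enough to prove it, for each
point, at one dyadic scale:
* at a point off `E`, for all small `Q` containing it, `f` is affine on `Q` up to `ε · diam Q`, so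
  the integral is `O(ε · area Q)`;
* at a point of `E`, lying in the `j`-th disc, take the scale at which `diam Q` is comparable to
  `d j`. Then `Q` lies in the `j`-th square, the integral is `O(sup |f| · d j)` trivially, and `μ Q`
  is at least of that order because the area of `Q` is comparable to `d j ^ 2`.
Letting `ε → 0` gives the vanishing of the integral.
-/
open MeasureTheory Set Filter Topology Metric Complex
open scoped ENNReal

/-! ### Boundary integrals over rectangles -/

/-- The integral of `f` over the positively oriented boundary of `[a, b] × [c, d]`. -/
noncomputable def rectIntegral (f : ℂ → ℂ) (a b c d : ℝ) : ℂ :=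
  (∫ x : ℝ in a..b, f (x + c * I)) - (∫ x : ℝ in a..b, f (x + d * I)) +
    I • (∫ y : ℝ in c..d, f (b + y * I)) - I • (∫ y : ℝ in c..d, f (a + y * I))

lemma rectIntegral_of_differentiable {A : ℂ → ℂ} (hA : Differentiable ℂ A) (a b c d : ℝ) :
    rectIntegral A a b c d = 0 := by
  have := integral_boundary_rect_eq_zero_of_differentiableOn A (a + c * I) (b + d * I)
    hA.differentiableOn
  simpa [rectIntegral] using this

lemma rectIntegral_sub {f g : ℂ → ℂ} (hf : Continuous f) (hg : Continuous g) (a b c d : ℝ) :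
    rectIntegral (fun z ↦ f z - g z) a b c d =
      rectIntegral f a b c d - rectIntegral g a b c d := by
  unfold rectIntegral
  rw [intervalIntegral.integral_sub, intervalIntegral.integral_sub, intervalIntegral.integral_sub,
    intervalIntegral.integral_sub]
  · simp only [smul_eq_mul]; ring
  all_goals exact Continuous.intervalIntegrable (by fun_prop) _ _

lemma rectIntegral_split {f : ℂ → ℂ} (hf : Continuous f) (a m b c k d : ℝ) :
    rectIntegral f a b c d = rectIntegral f a m c k + rectIntegral f m b c k +
      rectIntegral f a m k d + rectIntegral f m b k d := by
  have hH (y : ℝ) : (∫ x : ℝ in a..b, f (x + y * I)) =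
      (∫ x : ℝ in a..m, f (x + y * I)) + ∫ x : ℝ in m..b, f (x + y * I) :=
    (intervalIntegral.integral_add_adjacent_intervals
      (Continuous.intervalIntegrable (by fun_prop) _ _)
      (Continuous.intervalIntegrable (by fun_prop) _ _)).symm
  have hV (x : ℝ) : (∫ y : ℝ in c..d, f (x + y * I)) =
      (∫ y : ℝ in c..k, f (x + y * I)) + ∫ y : ℝ in k..d, f (x + y * I) :=
    (intervalIntegral.integral_add_adjacent_intervals
      (Continuous.intervalIntegrable (by fun_prop) _ _)
      (Continuous.intervalIntegrable (by fun_prop) _ _)).symm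
  simp only [rectIntegral, smul_eq_mul, hH c, hH d, hV a, hV b]
  ring

/-- By Cauchy's theorem for `A`, the boundary integral of `f` only sees how far `f` is from an
entire function `A`. -/
lemma norm_rectIntegral_le {f A : ℂ → ℂ} (hf : Continuous f) (hA : Differentiable ℂ A)
    {a b c d M : ℝ} (hab : a ≤ b) (hcd : c ≤ d)
    (h : ∀ x ∈ Icc a b, ∀ y ∈ Icc c d, ‖f (x + y * I) - A (x + y * I)‖ ≤ M) :
    ‖rectIntegral f a b c d‖ ≤ 2 * M * ((b - a) + (d - c)) := by
  have h0 : rectIntegral f a b c d = rectIntegral (fun z ↦ f z - A z) a b c d := by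
    rw [rectIntegral_sub hf hA.continuous, rectIntegral_of_differentiable hA, sub_zero]
  have hH (y : ℝ) (hy : y ∈ Icc c d) :
      ‖∫ x : ℝ in a..b, (f (x + y * I) - A (x + y * I))‖ ≤ M * (b - a) := by
    have := intervalIntegral.norm_integral_le_of_norm_le_const (a := a) (b := b) (C := M)
      (f := fun x : ℝ ↦ f (x + y * I) - A (x + y * I)) (fun x hx ↦ by
        rw [uIoc_of_le hab] at hx
        exact h x (Ioc_subset_Icc_self hx) y hy)
    rwa [abs_of_nonneg (by linarith)] at this
  have hV (x : ℝ) (hx : x ∈ Icc a b) :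
      ‖∫ y : ℝ in c..d, (f (x + y * I) - A (x + y * I))‖ ≤ M * (d - c) := by
    have := intervalIntegral.norm_integral_le_of_norm_le_const (a := c) (b := d) (C := M)
      (f := fun y : ℝ ↦ f (x + y * I) - A (x + y * I)) (fun y hy ↦ by
        rw [uIoc_of_le hcd] at hy
        exact h x hx y (Ioc_subset_Icc_self hy))
    rwa [abs_of_nonneg (by linarith)] at this
  rw [h0, rectIntegral]
  refine (norm_sub_le _ _).trans ?_
  have h1 := hH c (left_mem_Icc.2 hcd)
  have h2 := hH d (right_mem_Icc.2 hcd)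
  have h3 := hV a (left_mem_Icc.2 hab)
  have h4 := hV b (right_mem_Icc.2 hab)
  have h5 := norm_add_le ((∫ x : ℝ in a..b, (f (x + c * I) - A (x + c * I))) -
    (∫ x : ℝ in a..b, (f (x + d * I) - A (x + d * I))))
    (I • (∫ y : ℝ in c..d, (f (b + y * I) - A (b + y * I))))
  have h6 := norm_sub_le (∫ x : ℝ in a..b, (f (x + c * I) - A (x + c * I)))
    (∫ x : ℝ in a..b, (f (x + d * I) - A (x + d * I)))
  rw [norm_smul, norm_I, one_mul] at h5 ⊢
  linarith

/-! ### Bisection -/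

/-- Bisection principle: a property of rectangles of size `p / 2 ^ n` by `q / 2 ^ n` that passes
from the four quarters to the whole holds for `[a, a + p] × [c, c + q]` as soon as each point
`(u, v)` has one scale `n` at which all rectangles containing `(u, v)` have the property. The
argument `P n x y` refers to the rectangle with lower left corner `(x, y)`. -/
lemma bisection {p q : ℝ} (hp : 0 ≤ p) (hq : 0 ≤ q) (P : ℕ → ℝ → ℝ → Prop)
    (hP : ∀ n x y, P (n + 1) x y → P (n + 1) (x + p / 2 ^ (n + 1)) y →
      P (n + 1) x (y + q / 2 ^ (n + 1)) →
      P (n + 1) (x + p / 2 ^ (n + 1)) (y + q / 2 ^ (n + 1)) → P n x y) (a c : ℝ)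
    (hloc : ∀ u ∈ Icc a (a + p), ∀ v ∈ Icc c (c + q), ∃ n, ∀ x y,
      u ∈ Icc x (x + p / 2 ^ n) → v ∈ Icc y (y + q / 2 ^ n) → P n x y) : P 0 a c := by
  by_contra h0
  have step (n : ℕ) (z : ℝ × ℝ) (hz : ¬ P n z.1 z.2) : ∃ w : ℝ × ℝ, ¬ P (n + 1) w.1 w.2 ∧
      (w.1 = z.1 ∨ w.1 = z.1 + p / 2 ^ (n + 1)) ∧ (w.2 = z.2 ∨ w.2 = z.2 + q / 2 ^ (n + 1)) := by
    by_contra! hcon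
    refine hz (hP n z.1 z.2 ?_ ?_ ?_ ?_) <;> by_contra hbad
    · exact (hcon (_, _) hbad (Or.inl rfl)).1 rfl
    · exact (hcon (_, _) hbad (Or.inr rfl)).1 rfl
    · exact (hcon (z.1, z.2 + q / 2 ^ (n + 1)) hbad (Or.inl rfl)).2 rfl
    · exact (hcon (_, _) hbad (Or.inr rfl)).2 rfl
  choose! F hF1 hF2 hF3 using step
  let s : ℕ → ℝ × ℝ := fun n ↦ Nat.rec (a, c) (fun n z ↦ F n z) n
  have hs (n : ℕ) : ¬ P n (s n).1 (s n).2 := by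
    induction n with
    | zero => exact h0
    | succ n ih => exact hF1 n _ ih
  have half (r : ℝ) (n : ℕ) : r / 2 ^ n = r / 2 ^ (n + 1) + r / 2 ^ (n + 1) := by
    rw [pow_succ]; field_simp; ring
  have hx : ∃ u, ∀ n, u ∈ Icc (s n).1 ((s n).1 + p / 2 ^ n) := by
    have hanti : Antitone fun n ↦ Icc (s n).1 ((s n).1 + p / 2 ^ n) := by
      refine antitone_nat_of_succ_le fun n ↦ ?_
      have h1 : (s (n + 1)).1 = (s n).1 ∨ (s (n + 1)).1 = (s n).1 + p / 2 ^ (n + 1) :=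
        hF2 n _ (hs n)
      have h2 : 0 ≤ p / 2 ^ (n + 1) := by positivity
      have h3 := half p n
      refine Icc_subset_Icc ?_ ?_ <;> rcases h1 with h1 | h1 <;> linarith
    exact ⟨_, mem_iInter.1 (ciSup_mem_iInter_Icc_of_antitone_Icc hanti fun n ↦ by
      have : 0 ≤ p / 2 ^ n := by positivity
      linarith)⟩
  have hy : ∃ u, ∀ n, u ∈ Icc (s n).2 ((s n).2 + q / 2 ^ n) := by
    have hanti : Antitone fun n ↦ Icc (s n).2 ((s n).2 + q / 2 ^ n) := by
      refine antitone_nat_of_succ_le fun n ↦ ?_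
      have h1 : (s (n + 1)).2 = (s n).2 ∨ (s (n + 1)).2 = (s n).2 + q / 2 ^ (n + 1) :=
        hF3 n _ (hs n)
      have h2 : 0 ≤ q / 2 ^ (n + 1) := by positivity
      have h3 := half q n
      refine Icc_subset_Icc ?_ ?_ <;> rcases h1 with h1 | h1 <;> linarith
    exact ⟨_, mem_iInter.1 (ciSup_mem_iInter_Icc_of_antitone_Icc hanti fun n ↦ by
      have : 0 ≤ q / 2 ^ n := by positivity
      linarith)⟩
  obtain ⟨u, hu⟩ := hx
  obtain ⟨v, hv⟩ := hy
  obtain ⟨n, hn⟩ := hloc u (by simpa [s] using hu 0) v (by simpa [s] using hv 0)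
  exact hs n (hn _ _ (hu n) (hv n))

/-! ### Sets of zero length -/

/-- A set of zero length is covered by discs of positive radius with arbitrarily small total
radius: enlarge the diameters of an efficient cover by a summable positive sequence. -/
lemma exists_small_cover {E : Set ℂ} (hE : Measure.hausdorffMeasure 1 E = 0) {η : ℝ}
    (hη : 0 < η) : ∃ (x : ℕ → ℂ) (d : ℕ → ℝ), (∀ j, 0 < d j) ∧
      ∑' j, ENNReal.ofReal (d j) ≤ ENNReal.ofReal η ∧ E ⊆ ⋃ j, closedBall (x j) (d j) := by
  rw [Measure.hausdorffMeasure_apply] at hE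
  simp only [ENNReal.iSup_eq_zero] at hE
  have h1 := hE 1 one_pos
  have hη2 : 0 < ENNReal.ofReal (η / 2) := by simpa using hη
  have h2 := h1.trans_lt hη2
  simp only [iInf_lt_iff] at h2
  obtain ⟨t, hEt, htd, hsum⟩ := h2
  obtain ⟨δ, hδ, hδs⟩ := ENNReal.exists_pos_sum_of_countable hη2.ne' ℕ
  have hx (j : ℕ) : ∃ x : ℂ, (t j).Nonempty → x ∈ t j := by
    by_cases h : (t j).Nonempty
    · exact ⟨h.choose, fun _ ↦ h.choose_spec⟩
    · exact ⟨0, fun h' ↦ absurd h' h⟩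
  choose x hx using hx
  have hfin (j : ℕ) : ediam (t j) ≠ ⊤ := ((htd j).trans_lt ENNReal.one_lt_top).ne
  refine ⟨x, fun j ↦ (ediam (t j)).toReal + δ j, fun j ↦ ?_, ?_, ?_⟩
  · have := hδ j
    positivity
  · calc ∑' j, ENNReal.ofReal ((ediam (t j)).toReal + δ j)
        = ∑' j, (ediam (t j) + δ j) := by
          congr 1 with j
          rw [ENNReal.ofReal_add (by positivity) (by positivity), ENNReal.ofReal_toReal (hfin j),
            ENNReal.ofReal_coe_nnreal]
      _ = ∑' j, ediam (t j) + ∑' j, (δ j : ℝ≥0∞) := ENNReal.tsum_add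
      _ ≤ ENNReal.ofReal (η / 2) + ENNReal.ofReal (η / 2) := by
          refine add_le_add (le_trans (ENNReal.tsum_le_tsum fun j ↦ ?_) hsum.le) hδs.le
          rcases (t j).eq_empty_or_nonempty with h | h
          · simp [h]
          · simp [h]
      _ = ENNReal.ofReal η := by
          rw [← ENNReal.ofReal_add (by positivity) (by positivity), add_halves]
  · intro z hz
    obtain ⟨j, hj⟩ := mem_iUnion.1 (hEt hz)
    refine mem_iUnion.2 ⟨j, ?_⟩
    have h3 := edist_le_ediam_of_mem hj (hx j ⟨z, hj⟩)
    have h4 := ENNReal.toReal_mono (hfin j) h3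
    rw [← dist_edist] at h4
    rw [mem_closedBall]
    have : (0 : ℝ) ≤ δ j := (δ j).2
    linarith

/-- A set with an interior point contains a nondegenerate segment, whose length is positive. -/
lemma dense_compl_of_hausdorffMeasure_one_eq_zero {E : Set ℂ}
    (hE : Measure.hausdorffMeasure 1 E = 0) : Dense Eᶜ := by
  rw [← interior_eq_empty_iff_dense_compl, eq_empty_iff_forall_notMem]
  intro z hz
  obtain ⟨r, hr, hball⟩ := Metric.isOpen_iff.1 isOpen_interior z hz
  have hseg : segment ℝ z (z + (r / 2 : ℝ)) ⊆ E := by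
    refine ((convex_ball z r).segment_subset (mem_ball_self hr) ?_).trans
      (hball.trans interior_subset)
    simp only [mem_ball, dist_self_add_left, norm_real, Real.norm_eq_abs]
    rw [abs_of_pos (by positivity)]
    linarith
  have h := measure_mono_null hseg hE
  rw [hausdorffMeasure_segment] at h
  simp [hr.ne'] at h

/-- A difference-quotient limit along a dense subset `S` of `U` extends to all of `U`, because the
inequality expressing it is closed and `f` is continuous. -/
lemma differentiableAt_of_dense {U S : Set ℂ} (hU : IsOpen U) (hSU : S ⊆ U) (hUS : U ⊆ closure S)
    {f : ℂ → ℂ} (hf : ContinuousOn f U) {z : ℂ} (hz : z ∈ U)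
    (hd : DifferentiableWithinAt ℂ f S z) : DifferentiableAt ℂ f z := by
  obtain ⟨f', hf'⟩ := hd
  refine ⟨f', ?_⟩
  rw [hasFDerivAt_iff_isLittleO, Asymptotics.isLittleO_iff]
  rw [hasFDerivWithinAt_iff_isLittleO, Asymptotics.isLittleO_iff] at hf'
  intro c hc
  have h1 := eventually_nhdsWithin_iff.1 (hf' hc)
  obtain ⟨V, hV, hVo, hzV⟩ := _root_.eventually_nhds_iff.1 h1
  filter_upwards [(hVo.inter hU).mem_nhds ⟨hzV, hz⟩] with w hw
  have hwcl : w ∈ closure (V ∩ S) := hVo.inter_closure ⟨hw.1, hUS hw.2⟩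
  have hfw : ContinuousWithinAt f (V ∩ S) w :=
    (hf w hw.2).mono (inter_subset_right.trans hSU)
  refine ContinuousWithinAt.closure_le (f := fun w ↦ ‖f w - f z - f' (w - z)‖)
    (g := fun w ↦ c * ‖w - z‖) hwcl ?_ ?_ fun y hy ↦ hV y hy.1 hy.2
  · have : ContinuousWithinAt (fun w ↦ f' (w - z)) (V ∩ S) w :=
      Continuous.continuousWithinAt (by fun_prop)
    fun_prop
  · exact Continuous.continuousWithinAt (by fun_prop)

/-! ### The dominating measure -/

/-- The measure dominating the boundary integrals in `rectIntegral_eq_zero`: a small multiple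
`e` of the area, plus for each disc of radius `d j` about `x j` the area in the square of side
`6 * d j` about `x j`, with weight `C / d j`. The part coming from the `j`-th disc has total mass
`36 * C * d j`. -/
noncomputable def coverMeasure (e C : ℝ) (x : ℕ → ℂ) (d : ℕ → ℝ) : Measure (ℝ × ℝ) :=
  ENNReal.ofReal e • volume + Measure.sum fun j ↦ ENNReal.ofReal (C / d j) •
    volume.restrict (Icc ((x j).re - 3 * d j) ((x j).re + 3 * d j) ×ˢ
      Icc ((x j).im - 3 * d j) ((x j).im + 3 * d j))

lemma volume_rect (a b c d : ℝ) : volume (Ioc a b ×ˢ Ioc c d) =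
    ENNReal.ofReal (b - a) * ENNReal.ofReal (d - c) := by
  rw [Measure.volume_eq_prod, Measure.prod_prod, Real.volume_Ioc, Real.volume_Ioc]

lemma coverMeasure_le {e C p q η : ℝ} {x : ℕ → ℂ} {d : ℕ → ℝ} (he : 0 ≤ e) (hC : 0 ≤ C)
    (hp : 0 ≤ p) (hq : 0 ≤ q) (hη : 0 ≤ η) (hd : ∀ j, 0 < d j)
    (hs : ∑' j, ENNReal.ofReal (d j) ≤ ENNReal.ofReal η) (a c : ℝ) :
    coverMeasure e C x d (Ioc a (a + p) ×ˢ Ioc c (c + q)) ≤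
      ENNReal.ofReal (e * (p * q) + 36 * C * η) := by
  rw [ENNReal.ofReal_add (by positivity) (by positivity), coverMeasure, Measure.add_apply]
  gcongr
  · rw [Measure.smul_apply, volume_rect, smul_eq_mul, ENNReal.ofReal_mul he,
      ENNReal.ofReal_mul hp, add_sub_cancel_left, add_sub_cancel_left]
  · rw [Measure.sum_apply _ (measurableSet_Ioc.prod measurableSet_Ioc)]
    calc _ ≤ ∑' j, ENNReal.ofReal (36 * C) * ENNReal.ofReal (d j) := by
          refine ENNReal.tsum_le_tsum fun j ↦ ?_
          have hj := hd j
          rw [Measure.smul_apply, smul_eq_mul]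
          calc _ ≤ ENNReal.ofReal (C / d j) * volume (Icc ((x j).re - 3 * d j) ((x j).re + 3 * d j)
                ×ˢ Icc ((x j).im - 3 * d j) ((x j).im + 3 * d j)) := by
                gcongr ENNReal.ofReal (C / d j) * ?_
                exact (measure_mono (subset_univ _)).trans (Measure.restrict_apply_univ _).le
            _ = ENNReal.ofReal (C / d j * ((6 * d j) * (6 * d j))) := by
                rw [Measure.volume_eq_prod, Measure.prod_prod, Real.volume_Icc, Real.volume_Icc,
                  ENNReal.ofReal_mul (by positivity), ENNReal.ofReal_mul (by positivity)]
                congr 3 <;> ring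
            _ = _ := by
                rw [← ENNReal.ofReal_mul (by positivity)]
                congr 1
                field_simp
                ring
      _ ≤ _ := by
          rw [ENNReal.tsum_mul_left, ENNReal.ofReal_mul (p := 36 * C) (by positivity)]
          gcongr

lemma le_coverMeasure_of_area (e C : ℝ) (x : ℕ → ℂ) (d : ℕ → ℝ) (he : 0 ≤ e) {a b c k : ℝ}
    (hab : a ≤ b) :
    ENNReal.ofReal (e * ((b - a) * (k - c))) ≤
      coverMeasure e C x d (Ioc a b ×ˢ Ioc c k) := by
  rw [coverMeasure, Measure.add_apply, Measure.smul_apply, volume_rect, smul_eq_mul,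
    ENNReal.ofReal_mul he, ENNReal.ofReal_mul (by linarith)]
  exact le_self_add

lemma le_coverMeasure_of_subset (e C : ℝ) (x : ℕ → ℂ) (d : ℕ → ℝ) (hC : 0 ≤ C) {a b c k : ℝ}
    (hab : a ≤ b) (j : ℕ) (hd : 0 < d j)
    (hx : Icc a b ⊆ Icc ((x j).re - 3 * d j) ((x j).re + 3 * d j))
    (hy : Icc c k ⊆ Icc ((x j).im - 3 * d j) ((x j).im + 3 * d j)) :
    ENNReal.ofReal (C / d j * ((b - a) * (k - c))) ≤
      coverMeasure e C x d (Ioc a b ×ˢ Ioc c k) := by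
  have hm : MeasurableSet (Ioc a b ×ˢ Ioc c k) := measurableSet_Ioc.prod measurableSet_Ioc
  rw [coverMeasure, Measure.add_apply, Measure.sum_apply _ hm]
  refine le_trans (le_trans (le_of_eq ?_) (ENNReal.le_tsum j)) le_add_self
  rw [Measure.smul_apply, Measure.restrict_apply hm, inter_eq_left.2 (prod_mono
    (Ioc_subset_Icc_self.trans hx) (Ioc_subset_Icc_self.trans hy)), volume_rect, smul_eq_mul,
    ENNReal.ofReal_mul (by positivity), ENNReal.ofReal_mul (by linarith)]

/-- A measure is superadditive over the four half-open quarters of a half-open rectangle. -/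
lemma measure_quarters_le (μ : Measure (ℝ × ℝ)) {a m b c k d : ℝ} (ham : a ≤ m) (hmb : m ≤ b)
    (hck : c ≤ k) (hkd : k ≤ d) :
    μ (Ioc a m ×ˢ Ioc c k) + μ (Ioc m b ×ˢ Ioc c k) + μ (Ioc a m ×ˢ Ioc k d) +
      μ (Ioc m b ×ˢ Ioc k d) ≤ μ (Ioc a b ×ˢ Ioc c d) := by
  have hH (s : Set ℝ) (hs : MeasurableSet s) :
      μ (Ioc a m ×ˢ s) + μ (Ioc m b ×ˢ s) = μ (Ioc a b ×ˢ s) := by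
    rw [← Ioc_union_Ioc_eq_Ioc ham hmb, union_prod,
      measure_union ((Ioc_disjoint_Ioc_of_le le_rfl).set_prod_left _ _)
        (measurableSet_Ioc.prod hs)]
  rw [add_assoc, hH _ measurableSet_Ioc, hH _ measurableSet_Ioc,
    ← Ioc_union_Ioc_eq_Ioc hck hkd, prod_union,
      measure_union ((Ioc_disjoint_Ioc_of_le le_rfl).set_prod_right _ _)
        (measurableSet_Ioc.prod measurableSet_Ioc)]

lemma norm_sub_le_of_mem_rect {u v s t x y p q : ℝ} (hu : u ∈ Icc x (x + p))
    (hv : v ∈ Icc y (y + q)) (hs : s ∈ Icc x (x + p)) (ht : t ∈ Icc y (y + q)) :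
    ‖(s + t * I : ℂ) - (u + v * I)‖ ≤ p + q := by
  refine (norm_le_abs_re_add_abs_im _).trans ?_
  have h1 : |s - u| ≤ p := abs_le.2 ⟨by linarith [hu.2, hs.1], by linarith [hu.1, hs.2]⟩
  have h2 : |t - v| ≤ q := abs_le.2 ⟨by linarith [hv.2, ht.1], by linarith [hv.1, ht.2]⟩
  simpa using add_le_add h1 h2

/-! ### Goursat's theorem and removability -/

/-- Goursat's theorem off a set of zero length. -/
lemma rectIntegral_eq_zero {E : Set ℂ} (hE : Measure.hausdorffMeasure 1 E = 0) {f : ℂ → ℂ}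
    (hf : Continuous f) {a c p q : ℝ} (hp : 0 < p) (hq : 0 < q)
    (hd : ∀ x ∈ Icc a (a + p), ∀ y ∈ Icc c (c + q), (x + y * I : ℂ) ∉ E →
      DifferentiableAt ℂ f (x + y * I)) :
    rectIntegral f a (a + p) c (c + q) = 0 := by
  -- `M` bounds `f` on every rectangle of size at most `p` by `q` that meets the given one.
  obtain ⟨M, hM⟩ : ∃ M, ∀ s ∈ Icc (a - p) (a + 2 * p), ∀ t ∈ Icc (c - q) (c + 2 * q),
      ‖f (s + t * I)‖ ≤ M := by
    obtain ⟨M, hM⟩ := (isCompact_Icc.prod isCompact_Icc).exists_bound_of_continuousOn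
      (s := Icc (a - p) (a + 2 * p) ×ˢ Icc (c - q) (c + 2 * q))
      (f := fun z : ℝ × ℝ ↦ f (z.1 + z.2 * I)) (Continuous.continuousOn (by fun_prop))
    exact ⟨M, fun s hs t ht ↦ hM (s, t) ⟨hs, ht⟩⟩
  have hM0 : 0 ≤ M := (norm_nonneg _).trans
    (hM a ⟨by linarith, by linarith⟩ c ⟨by linarith, by linarith⟩)
  set L := p + q with hL
  have hL0 : 0 < L := by positivity
  set K := 2 * L ^ 2 / (p * q) with hK
  have hK0 : 0 < K := by positivity
  have hKpq : K * (p * q) = 2 * L ^ 2 := by rw [hK]; field_simp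
  have key : ∀ ε : ℝ, 0 < ε → ε ≤ L →
      ‖rectIntegral f a (a + p) c (c + q)‖ ≤ (K * (p * q) + 36 * (K * M)) * ε := by
    intro ε hε hεL
    obtain ⟨x, d, hd0, hdsum, hcov⟩ := exists_small_cover hE hε
    set μ := coverMeasure (K * ε) (K * M) x d with hμ
    have main : ENNReal.ofReal ‖rectIntegral f a (a + p / 2 ^ 0) c (c + q / 2 ^ 0)‖ ≤
        μ (Ioc a (a + p / 2 ^ 0) ×ˢ Ioc c (c + q / 2 ^ 0)) := by
      refine bisection hp.le hq.le (fun n x y ↦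
        ENNReal.ofReal ‖rectIntegral f x (x + p / 2 ^ n) y (y + q / 2 ^ n)‖ ≤
        μ (Ioc x (x + p / 2 ^ n) ×ˢ Ioc y (y + q / 2 ^ n))) ?_ a c ?_
      · intro n x y h1 h2 h3 h4
        have hx : x + p / 2 ^ n = x + p / 2 ^ (n + 1) + p / 2 ^ (n + 1) := by
          rw [pow_succ]; field_simp; ring
        have hy : y + q / 2 ^ n = y + q / 2 ^ (n + 1) + q / 2 ^ (n + 1) := by
          rw [pow_succ]; field_simp; ring
        have hp' : 0 ≤ p / 2 ^ (n + 1) := by positivity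
        have hq' : 0 ≤ q / 2 ^ (n + 1) := by positivity
        rw [hx, hy]
        refine le_trans ?_ (measure_quarters_le μ (le_add_of_nonneg_right hp')
          (le_add_of_nonneg_right hp') (le_add_of_nonneg_right hq') (le_add_of_nonneg_right hq'))
        refine le_trans ?_ (add_le_add (add_le_add (add_le_add h1 h2) h3) h4)
        rw [rectIntegral_split hf x (x + p / 2 ^ (n + 1)) _ y (y + q / 2 ^ (n + 1)) _]
        simp only [ofReal_norm]
        refine (enorm_add_le _ _).trans ?_
        gcongr
        refine (enorm_add_le _ _).trans ?_
        gcongr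
        exact enorm_add_le _ _
      · intro u hu v hv
        have hLn (n : ℕ) : p / 2 ^ n + q / 2 ^ n = L / 2 ^ n := by rw [hL]; ring
        by_cases huv : (u + v * I : ℂ) ∈ E
        · -- A disc of radius `d j` contains the point; the scale is the one comparable to `d j`.
          obtain ⟨j, hj⟩ := mem_iUnion.1 (hcov huv)
          have hdj := hd0 j
          have hdL : d j ≤ L := by
            refine le_trans ?_ hεL
            have := (ENNReal.le_tsum j).trans hdsum
            exact (ENNReal.ofReal_le_ofReal_iff hε.le).1 this
          obtain ⟨n, hn1, hn2⟩ := exists_nat_pow_near (x := L / d j) (y := (2 : ℝ))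
            ((one_le_div hdj).2 hdL) one_lt_two
          have hn1' : d j ≤ L / 2 ^ n := by
            rw [le_div_iff₀ hdj] at hn1
            rw [le_div_iff₀ (by positivity)]; linarith
          have hn2' : L / 2 ^ n < 2 * d j := by
            rw [div_lt_iff₀ hdj, pow_succ] at hn2
            rw [div_lt_iff₀ (by positivity)]; linarith
          refine ⟨n, fun r s hur hvs ↦ ?_⟩
          have hp' : 0 < p / 2 ^ n := by positivity
          have hq' : 0 < q / 2 ^ n := by positivity
          have hpp : p / 2 ^ n ≤ p := div_le_self hp.le (one_le_pow₀ one_le_two)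
          have hqq : q / 2 ^ n ≤ q := div_le_self hq.le (one_le_pow₀ one_le_two)
          have hLn' := hLn n
          have hju : |u - (x j).re| ≤ d j := by
            have := (abs_re_le_norm _).trans (mem_closedBall_iff_norm.1 hj)
            simpa using this
          have hjv : |v - (x j).im| ≤ d j := by
            have := (abs_im_le_norm _).trans (mem_closedBall_iff_norm.1 hj)
            simpa using this
          rw [abs_le] at hju hjv
          refine le_trans (ENNReal.ofReal_le_ofReal ?_) (le_coverMeasure_of_subset _ _ x d
            (by positivity) (by linarith) j hdj (Icc_subset_Icc ?_ ?_) (Icc_subset_Icc ?_ ?_))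
          · have hb := norm_rectIntegral_le hf (A := fun _ ↦ 0) (by fun_prop) (M := M)
              (a := r) (b := r + p / 2 ^ n) (c := s) (d := s + q / 2 ^ n)
              (by linarith) (by linarith) (fun s' hs' t' ht' ↦ by
                rw [sub_zero]
                exact hM _ ⟨by linarith [hs'.1, hur.2, hu.1], by linarith [hs'.2, hur.1, hu.2]⟩
                  _ ⟨by linarith [ht'.1, hvs.2, hv.1], by linarith [ht'.2, hvs.1, hv.2]⟩)
            refine hb.trans ?_
            rw [add_sub_cancel_left, add_sub_cancel_left, hLn]
            calc 2 * M * (L / 2 ^ n) ≤ 2 * M * (L / 2 ^ n) * ((L / 2 ^ n) / d j) :=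
                  le_mul_of_one_le_right (by positivity) ((one_le_div hdj).2 hn1')
              _ = M / d j * (2 * L ^ 2) / 2 ^ n / 2 ^ n := by ring
              _ = M / d j * (K * (p * q)) / 2 ^ n / 2 ^ n := by rw [hKpq]
              _ = _ := by ring
          all_goals linarith [hur.1, hur.2, hvs.1, hvs.2]
        · -- Near a point of differentiability `f` is affine up to an error `ε` times the diameter.
          obtain ⟨f', hf'⟩ := hd u hu v hv huv
          rw [hasFDerivAt_iff_isLittleO, Asymptotics.isLittleO_iff] at hf'
          obtain ⟨δ, hδ, hball⟩ := Metric.eventually_nhds_iff.1 (hf' hε)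
          obtain ⟨n, hn⟩ := pow_unbounded_of_one_lt (L / δ) (one_lt_two (α := ℝ))
          have hn' : L / 2 ^ n < δ := by
            rw [div_lt_iff₀ hδ] at hn
            rw [div_lt_iff₀ (by positivity)]; linarith
          refine ⟨n, fun r s hur hvs ↦ ?_⟩
          have hp' : 0 < p / 2 ^ n := by positivity
          have hq' : 0 < q / 2 ^ n := by positivity
          refine le_trans (ENNReal.ofReal_le_ofReal ?_)
            (le_coverMeasure_of_area _ _ x d (by positivity) (by linarith))
          have hb := norm_rectIntegral_le hf
              (A := fun z ↦ f (u + v * I) + f' (z - (u + v * I))) (by fun_prop)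
              (M := ε * (L / 2 ^ n))
              (a := r) (b := r + p / 2 ^ n) (c := s) (d := s + q / 2 ^ n)
              (by linarith) (by linarith) (fun s' hs' t' ht' ↦ by
                have hdist := norm_sub_le_of_mem_rect hur hvs hs' ht'
                rw [hLn] at hdist
                rw [← sub_sub]
                refine (hball ?_).trans ?_
                · rw [dist_eq_norm]; linarith
                · gcongr)
          refine hb.trans (le_of_eq ?_)
          rw [add_sub_cancel_left, add_sub_cancel_left, hLn]
          calc 2 * (ε * (L / 2 ^ n)) * (L / 2 ^ n) = ε * (2 * L ^ 2) / 2 ^ n / 2 ^ n := by ring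
            _ = ε * (K * (p * q)) / 2 ^ n / 2 ^ n := by rw [hKpq]
            _ = _ := by ring
    rw [pow_zero, div_one, div_one] at main
    have h2 := main.trans (coverMeasure_le (by positivity) (by positivity) hp.le hq.le hε.le
      hd0 hdsum a c)
    have h3 := (ENNReal.ofReal_le_ofReal_iff (by positivity)).1 h2
    linarith
  rw [← norm_le_zero_iff]
  have hlim : Tendsto (fun ε : ℝ ↦ (K * (p * q) + 36 * (K * M)) * ε) (𝓝[>] 0) (𝓝 0) := by
    have : Tendsto (fun ε : ℝ ↦ (K * (p * q) + 36 * (K * M)) * ε) (𝓝 0)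
        (𝓝 ((K * (p * q) + 36 * (K * M)) * 0)) := Continuous.tendsto (by fun_prop) 0
    rw [mul_zero] at this
    exact this.mono_left nhdsWithin_le_nhds
  refine ge_of_tendsto hlim ?_
  filter_upwards [Ioc_mem_nhdsGT hL0] with ε hε
  exact key ε hε.1 hε.2

lemma isConservativeOn_of_null {E U : Set ℂ} (hE : Measure.hausdorffMeasure 1 E = 0) {f : ℂ → ℂ}
    (hf : Continuous f) (hd : ∀ z ∈ U, z ∉ E → DifferentiableAt ℂ f z) :
    IsConservativeOn f U := by
  intro z w hzw
  rw [← add_eq_zero_iff_eq_neg, wedgeIntegral_add_wedgeIntegral_eq]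
  change rectIntegral f z.re w.re z.im w.im = 0
  -- The corners are in arbitrary position, so the degenerate and reversed cases are reduced to
  -- `rectIntegral_eq_zero`.
  have base (a b c d : ℝ) (hab : a ≤ b) (hcd : c ≤ d) (h : Icc a b ×ℂ Icc c d ⊆ U) :
      rectIntegral f a b c d = 0 := by
    rcases hab.eq_or_lt with rfl | hab
    · simp [rectIntegral]
    rcases hcd.eq_or_lt with rfl | hcd
    · simp [rectIntegral]
    have := rectIntegral_eq_zero hE hf (a := a) (c := c) (sub_pos.2 hab) (sub_pos.2 hcd)
      (fun x hx y hy hxy ↦ hd _ (h (by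
        rw [mem_reProdIm]
        simpa using And.intro hx hy)) hxy)
    simpa using this
  have swapH (a b c d : ℝ) : rectIntegral f a b c d = - rectIntegral f b a c d := by
    simp only [rectIntegral, intervalIntegral.integral_symm b a, smul_eq_mul]
    ring
  have swapV (a b c d : ℝ) : rectIntegral f a b c d = - rectIntegral f a b d c := by
    simp only [rectIntegral, intervalIntegral.integral_symm d c, smul_eq_mul]
    ring
  rw [Rectangle] at hzw
  rcases le_total z.re w.re with h1 | h1 <;> rcases le_total z.im w.im with h2 | h2
  · rw [uIcc_of_le h1, uIcc_of_le h2] at hzw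
    exact base _ _ _ _ h1 h2 hzw
  · rw [uIcc_of_le h1, uIcc_of_ge h2] at hzw
    rw [swapV, base _ _ _ _ h1 h2 hzw, neg_zero]
  · rw [uIcc_of_ge h1, uIcc_of_le h2] at hzw
    rw [swapH, base _ _ _ _ h1 h2 hzw, neg_zero]
  · rw [uIcc_of_ge h1, uIcc_of_ge h2] at hzw
    rw [swapH, swapV, base _ _ _ _ h1 h2 hzw, neg_zero, neg_zero]

/-- Sets of zero one-dimensional Hausdorff measure are removable for continuous
functions holomorphic off the set. -/
theorem stmt_10 (U : Set ℂ) (hU : IsOpen U) (E : Set ℂ)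
    (hE : MeasureTheory.Measure.hausdorffMeasure 1 E = 0) (f : ℂ → ℂ)
    (hf : ContinuousOn f U)
    (hd : DifferentiableOn ℂ f (U \ E)) :
    DifferentiableOn ℂ f U := by
  have hUcl : U ⊆ closure (U \ E) :=
    (dense_compl_of_hausdorffMeasure_one_eq_zero hE).open_subset_closure_inter hU
  have hd' : ∀ z ∈ U, z ∉ E → DifferentiableAt ℂ f z := fun z hz hzE ↦
    differentiableAt_of_dense hU sdiff_subset hUcl hf hz (hd z ⟨hz, hzE⟩)
  intro z₀ hz₀
  obtain ⟨r, hr, hrU⟩ := Metric.nhds_basis_closedBall.mem_iff.1 (hU.mem_nhds hz₀)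
  -- Tietze: replace `f` by a globally continuous function that agrees with it near `z₀`.
  obtain ⟨g, hg⟩ := ContinuousMap.exists_restrict_eq (Y := ℂ)
    (isClosed_closedBall (x := z₀) (ε := r))
    ⟨(closedBall z₀ r).domRestrict f, (hf.mono hrU).domRestrict⟩
  have hgf : ∀ z ∈ closedBall z₀ r, g z = f z := fun z hz ↦
    congrArg (fun h : C(closedBall z₀ r, ℂ) ↦ h ⟨z, hz⟩) hg
  have hev : ∀ z ∈ ball z₀ r, (g : ℂ → ℂ) =ᶠ[𝓝 z] f := fun z hz ↦ by
    filter_upwards [isOpen_ball.mem_nhds hz] with w hw using hgf w (ball_subset_closedBall hw)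
  have hcons : IsConservativeOn g (ball z₀ r) := isConservativeOn_of_null hE g.continuous
    fun z hz hzE ↦ (hd' z (hrU (ball_subset_closedBall hz)) hzE).congr_of_eventuallyEq (hev z hz)
  have hgd : DifferentiableOn ℂ g (ball z₀ r) :=
    (isConservativeOn_and_continuousOn_iff_isDifferentiableOn isOpen_ball).1
      ⟨hcons, g.continuous.continuousOn⟩
  have hz : z₀ ∈ ball z₀ r := mem_ball_self hr
  exact ((hgd.differentiableAt (isOpen_ball.mem_nhds hz)).congr_of_eventuallyEq
    (hev z₀ hz).symm).differentiableWithinAt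
end

section
/- Let 0 < α < 1, let U be an open subset of ℂ, let E ⊆ ℂ be a set whose (1+α)-dimensional Hausdorff measure is zero, and let f : ℂ → ℂ be Hölder continuous of exponent α on U (i.e., ‖f(x) − f(y)‖ ≤ C·‖x − y‖^α for some constant C ≥ 0 and all x, y ∈ U) and complex differentiable at every point of U \ E (differentiability within U \ E). Then f is complex differentiable at every point of U. -/
/-!
By Morera's theorem it suffices that the integral of `f` over the boundary of every closed rectangle
`R ⊆ U` vanishes. Since `dim E ≤ 1 + α < 2`, the complement of `E` is dense, and continuity of `f`
upgrades differentiability within `U \ E` to differentiability at each point of `U \ E`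
(`differentiableAt_off`). No closedness of `E` is used.

The vanishing (`rectInt_eq_zero`) is a Goursat-type bisection. Given `ε`, cover `E` by balls
`B(x i, r i)` with `∑ r i ^ (1 + α) ≤ ε` and let `ν` be the measure with density
`ε + ∑ w i · 1_{B(x i, 3 r i)}`, where `w i` is a constant times `r i ^ (α - 1)`.
Then `ν R = O(ε)`, and the claim is that `|∮_{∂R} f| ≤ ν R`. Both `∮_{∂R} f` and `ν R` are additive under
bisection of `R`, so if the inequality fails, it fails along a nested sequence of rectangles `Q n`, similar
to `R`, that shrink to a point `z`.

* If `z ∉ E`, differentiability at `z` gives `|∮_{∂Q n} f| = o(|Q n|)`, eventually below `ε |Q n|`.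
* If `z ∈ B(x i, r i)`, take `n` with the size `t` of `Q n` between `r i` and `2 r i`. Then
  `Q n ⊆ B(x i, 3 r i)`, and the Hölder bound `|∮_{∂Q n} f| ≤ 2 C t ^ (1 + α)` is at most
  `w i |Q n| ≤ ν (Q n)`.

Either way `|∮_{∂Q n} f| ≤ ν (Q n)` for some `n`, a contradiction.
-/

open MeasureTheory Set Complex
open scoped ENNReal

noncomputable section
namespace HolderRemovable

/-! ### Bisection and integrals over boundaries of rectangles -/

/-- The counterclockwise integral of `f` over the boundary of `[a, b] × [c, d]`, with the sign
convention of interval integrals when the endpoints are not in increasing order. -/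
def rectInt (f : ℂ → ℂ) (a b c d : ℝ) : ℂ :=
  (∫ x : ℝ in a..b, f (x + c * I)) - (∫ x : ℝ in a..b, f (x + d * I)) +
    I * (∫ y : ℝ in c..d, f (b + y * I)) - I * (∫ y : ℝ in c..d, f (a + y * I))

/-- If a property of rectangles passes from a rectangle to one of its four quarters, it holds along a
sequence of dyadic subrectangles, one of each generation, all containing a common point `(x, y)`. -/
lemma bisect (Bad : ℝ → ℝ → ℝ → ℝ → Prop) {a b c d : ℝ} (hab : a < b) (hcd : c < d)
    (h : Bad a b c d)
    (step : ∀ a b c d, a < b → c < d → Bad a b c d →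
      Bad a ((a + b) / 2) c ((c + d) / 2) ∨ Bad ((a + b) / 2) b c ((c + d) / 2) ∨
      Bad a ((a + b) / 2) ((c + d) / 2) d ∨ Bad ((a + b) / 2) b ((c + d) / 2) d) :
    ∃ x y, ∀ n : ℕ, ∃ a' b' c' d', a ≤ a' ∧ a' ≤ x ∧ x ≤ b' ∧ b' ≤ b ∧
      c ≤ c' ∧ c' ≤ y ∧ y ≤ d' ∧ d' ≤ d ∧ b' - a' = (b - a) / 2 ^ n ∧
      d' - c' = (d - c) / 2 ^ n ∧ Bad a' b' c' d' := by
  let T := {q : ℝ × ℝ × ℝ × ℝ // q.1 < q.2.1 ∧ q.2.2.1 < q.2.2.2 ∧ Bad q.1 q.2.1 q.2.2.1 q.2.2.2}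
  have key : ∀ q : T, ∃ r : T, q.1.1 ≤ r.1.1 ∧ r.1.2.1 ≤ q.1.2.1 ∧ q.1.2.2.1 ≤ r.1.2.2.1 ∧
      r.1.2.2.2 ≤ q.1.2.2.2 ∧ r.1.2.1 - r.1.1 = (q.1.2.1 - q.1.1) / 2 ∧
      r.1.2.2.2 - r.1.2.2.1 = (q.1.2.2.2 - q.1.2.2.1) / 2 := by
    rintro ⟨⟨a, b, c, d⟩, hab, hcd, hB⟩
    simp only at hab hcd hB
    rcases step a b c d hab hcd hB with h | h | h | h
    · refine ⟨⟨⟨_, _, _, _⟩, ?_, ?_, h⟩, ?_, ?_, ?_, ?_, ?_, ?_⟩ <;> simp only <;> linarith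
    · refine ⟨⟨⟨_, _, _, _⟩, ?_, ?_, h⟩, ?_, ?_, ?_, ?_, ?_, ?_⟩ <;> simp only <;> linarith
    · refine ⟨⟨⟨_, _, _, _⟩, ?_, ?_, h⟩, ?_, ?_, ?_, ?_, ?_, ?_⟩ <;> simp only <;> linarith
    · refine ⟨⟨⟨_, _, _, _⟩, ?_, ?_, h⟩, ?_, ?_, ?_, ?_, ?_, ?_⟩ <;> simp only <;> linarith
  choose F hF using key
  let s : ℕ → T := fun n => F^[n] ⟨(a, b, c, d), hab, hcd, h⟩
  have hs : ∀ n, s (n + 1) = F (s n) := fun n => Function.iterate_succ_apply' _ _ _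
  have hx := ciSup_mem_iInter_Icc_of_antitone_Icc
    (f := fun n => (s n).1.1) (g := fun n => (s n).1.2.1)
    (antitone_nat_of_succ_le fun n => by
      rw [hs]; exact Icc_subset_Icc (hF (s n)).1 (hF (s n)).2.1) (fun n => (s n).2.1.le)
  have hy := ciSup_mem_iInter_Icc_of_antitone_Icc
    (f := fun n => (s n).1.2.2.1) (g := fun n => (s n).1.2.2.2)
    (antitone_nat_of_succ_le fun n => by
      rw [hs]; exact Icc_subset_Icc (hF (s n)).2.2.1 (hF (s n)).2.2.2.1) (fun n => (s n).2.2.1.le)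
  rw [mem_iInter] at hx hy
  have hbd : ∀ n, a ≤ (s n).1.1 ∧ (s n).1.2.1 ≤ b ∧ c ≤ (s n).1.2.2.1 ∧ (s n).1.2.2.2 ≤ d ∧
      (s n).1.2.1 - (s n).1.1 = (b - a) / 2 ^ n ∧
      (s n).1.2.2.2 - (s n).1.2.2.1 = (d - c) / 2 ^ n := by
    intro n
    induction n with
    | zero => simp [s]
    | succ n ih =>
      obtain ⟨h1, h2, h3, h4, h5, h6⟩ := hF (s n)
      obtain ⟨i1, i2, i3, i4, i5, i6⟩ := ih
      rw [hs, pow_succ, ← div_div, ← div_div, ← i5, ← i6]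
      exact ⟨i1.trans h1, h2.trans i2, i3.trans h3, h4.trans i4, h5, h6⟩
  refine ⟨⨆ n, (s n).1.1, ⨆ n, (s n).1.2.2.1, fun n => ?_⟩
  obtain ⟨i1, i2, i3, i4, i5, i6⟩ := hbd n
  exact ⟨_, _, _, _, i1, (hx n).1, (hx n).2, i2, i3, (hy n).1, (hy n).2, i4, i5, i6, (s n).2.2.2⟩

lemma intervalIntegrable_horiz {f : ℂ → ℂ} {S : Set ℂ} (hf : ContinuousOn f S) {a b c : ℝ}
    (h : ∀ x ∈ uIcc a b, (x + c * I : ℂ) ∈ S) :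
    IntervalIntegrable (fun x : ℝ => f (x + c * I)) volume a b :=
  (hf.comp (by fun_prop) h).intervalIntegrable

lemma intervalIntegrable_vert {f : ℂ → ℂ} {S : Set ℂ} (hf : ContinuousOn f S) {a c d : ℝ}
    (h : ∀ y ∈ uIcc c d, (a + y * I : ℂ) ∈ S) :
    IntervalIntegrable (fun y : ℝ => f (a + y * I)) volume c d :=
  (hf.comp (by fun_prop) h).intervalIntegrable

lemma rectInt_split {f : ℂ → ℂ} {a b c d m n : ℝ} (ham : a ≤ m) (hmb : m ≤ b)
    (hcn : c ≤ n) (hnd : n ≤ d) (hf : ContinuousOn f (Icc a b ×ℂ Icc c d)) :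
    rectInt f a b c d = rectInt f a m c n + rectInt f m b c n + rectInt f a m n d +
      rectInt f m b n d := by
  have H : ∀ {y}, y ∈ Icc c d → ∀ {u v}, a ≤ u → u ≤ v → v ≤ b →
      IntervalIntegrable (fun x : ℝ => f (x + y * I)) volume u v := by
    intro y hy u v hu huv hv
    refine intervalIntegrable_horiz hf fun x hx => ?_
    rw [uIcc_of_le huv] at hx
    simp only [mem_reProdIm]
    simp
    exact ⟨⟨hu.trans hx.1, hx.2.trans hv⟩, hy⟩
  have V : ∀ {x}, x ∈ Icc a b → ∀ {u v}, c ≤ u → u ≤ v → v ≤ d →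
      IntervalIntegrable (fun y : ℝ => f (x + y * I)) volume u v := by
    intro x hx u v hu huv hv
    refine intervalIntegrable_vert hf fun y hy => ?_
    rw [uIcc_of_le huv] at hy
    simp only [mem_reProdIm]
    simp
    exact ⟨hx, ⟨hu.trans hy.1, hy.2.trans hv⟩⟩
  have hc : c ∈ Icc c d := ⟨le_rfl, hcn.trans hnd⟩
  have hd : d ∈ Icc c d := ⟨hcn.trans hnd, le_rfl⟩
  have ha : a ∈ Icc a b := ⟨le_rfl, ham.trans hmb⟩
  have hb : b ∈ Icc a b := ⟨ham.trans hmb, le_rfl⟩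
  unfold rectInt
  rw [← intervalIntegral.integral_add_adjacent_intervals (H hc le_rfl ham hmb) (H hc ham hmb le_rfl),
    ← intervalIntegral.integral_add_adjacent_intervals (H hd le_rfl ham hmb) (H hd ham hmb le_rfl),
    ← intervalIntegral.integral_add_adjacent_intervals (V ha le_rfl hcn hnd) (V ha hcn hnd le_rfl),
    ← intervalIntegral.integral_add_adjacent_intervals (V hb le_rfl hcn hnd) (V hb hcn hnd le_rfl)]
  ring

/-- The integral of an entire `g` around a rectangle vanishes, so the integral of `f` is controlled
by the distance from `f` to `g`. Applied to constants (Hölder bound) and to first-order Taylor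
polynomials (differentiability). -/
lemma norm_rectInt_le {f g : ℂ → ℂ} {a b c d M : ℝ} (hab : a ≤ b) (hcd : c ≤ d)
    (hf : ContinuousOn f (Icc a b ×ℂ Icc c d)) (hg : Differentiable ℂ g)
    (hM : ∀ z ∈ Icc a b ×ℂ Icc c d, ‖f z - g z‖ ≤ M) :
    ‖rectInt f a b c d‖ ≤ 2 * M * ((b - a) + (d - c)) := by
  have hg0 : rectInt g a b c d = 0 := by
    have := integral_boundary_rect_eq_zero_of_differentiableOn g (a + c * I) (b + d * I)
      hg.differentiableOn
    simpa [rectInt] using this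
  have mem : ∀ {x y : ℝ}, x ∈ Icc a b → y ∈ Icc c d → (x + y * I : ℂ) ∈ Icc a b ×ℂ Icc c d := by
    intro x y hx hy
    simp only [mem_reProdIm]
    simp
    exact ⟨hx, hy⟩
  have hc : c ∈ Icc c d := ⟨le_rfl, hcd⟩
  have hd : d ∈ Icc c d := ⟨hcd, le_rfl⟩
  have ha : a ∈ Icc a b := ⟨le_rfl, hab⟩
  have hb : b ∈ Icc a b := ⟨hab, le_rfl⟩
  have hH : ∀ {h : ℂ → ℂ}, ContinuousOn h (Icc a b ×ℂ Icc c d) → ∀ {y}, y ∈ Icc c d →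
      IntervalIntegrable (fun x : ℝ => h (x + y * I)) volume a b := fun hh y hy =>
    intervalIntegrable_horiz hh fun x hx => mem (by rwa [uIcc_of_le hab] at hx) hy
  have hV : ∀ {h : ℂ → ℂ}, ContinuousOn h (Icc a b ×ℂ Icc c d) → ∀ {x}, x ∈ Icc a b →
      IntervalIntegrable (fun y : ℝ => h (x + y * I)) volume c d := fun hh x hx =>
    intervalIntegrable_vert hh fun y hy => mem hx (by rwa [uIcc_of_le hcd] at hy)
  have hgc : ContinuousOn g (Icc a b ×ℂ Icc c d) := hg.continuous.continuousOn
  have e : rectInt f a b c d = rectInt (fun z => f z - g z) a b c d := by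
    rw [← sub_zero (rectInt f a b c d), ← hg0]
    unfold rectInt
    rw [intervalIntegral.integral_sub (hH hf hc) (hH hgc hc),
      intervalIntegral.integral_sub (hH hf hd) (hH hgc hd),
      intervalIntegral.integral_sub (hV hf ha) (hV hgc ha),
      intervalIntegral.integral_sub (hV hf hb) (hV hgc hb)]
    ring
  have bH : ∀ y ∈ Icc c d, ‖∫ x : ℝ in a..b, (f (x + y * I) - g (x + y * I))‖ ≤ M * (b - a) := by
    intro y hy
    rw [← abs_of_nonneg (sub_nonneg.2 hab)]
    refine intervalIntegral.norm_integral_le_of_norm_le_const fun x hx => hM _ (mem ?_ hy)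
    rw [uIoc_of_le hab] at hx
    exact Ioc_subset_Icc_self hx
  have bV : ∀ x ∈ Icc a b, ‖I * ∫ y : ℝ in c..d, (f (x + y * I) - g (x + y * I))‖ ≤
      M * (d - c) := by
    intro x hx
    rw [norm_mul, norm_I, one_mul, ← abs_of_nonneg (sub_nonneg.2 hcd)]
    refine intervalIntegral.norm_integral_le_of_norm_le_const fun y hy => hM _ (mem hx ?_)
    rw [uIoc_of_le hcd] at hy
    exact Ioc_subset_Icc_self hy
  rw [e]
  unfold rectInt
  refine (norm_sub_le _ _).trans ?_
  have t1 := norm_add_le ((∫ x : ℝ in a..b, (f (x + c * I) - g (x + c * I))) -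
    (∫ x : ℝ in a..b, (f (x + d * I) - g (x + d * I))))
    (I * ∫ y : ℝ in c..d, (f (b + y * I) - g (b + y * I)))
  have t2 := norm_sub_le (∫ x : ℝ in a..b, (f (x + c * I) - g (x + c * I)))
    (∫ x : ℝ in a..b, (f (x + d * I) - g (x + d * I)))
  linarith [bH c hc, bH d hd, bV a ha, bV b hb]

/-! ### Measures of rectangles -/

lemma measurableSet_rect (a b c d : ℝ) : MeasurableSet (Ioc a b ×ℂ Ioc c d) :=
  (measurable_re measurableSet_Ioc).inter (measurable_im measurableSet_Ioc)

lemma volume_rect (a b c d : ℝ) : volume (Ioc a b ×ℂ Ioc c d) =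
    ENNReal.ofReal (b - a) * ENNReal.ofReal (d - c) := by
  rw [← Real.volume_Ioc, ← Real.volume_Ioc, ← Measure.prod_prod, ← Measure.volume_eq_prod,
    ← volume_preserving_equiv_real_prod.measure_preimage
      (measurableSet_Ioc.prod measurableSet_Ioc).nullMeasurableSet]
  rfl

lemma measure_rect_split (ν : Measure ℂ) {a b c d m n : ℝ} (ham : a ≤ m) (hmb : m ≤ b)
    (hcn : c ≤ n) (hnd : n ≤ d) :
    ν (Ioc a b ×ℂ Ioc c d) = ν (Ioc a m ×ℂ Ioc c n) + ν (Ioc m b ×ℂ Ioc c n) +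
      ν (Ioc a m ×ℂ Ioc n d) + ν (Ioc m b ×ℂ Ioc n d) := by
  rw [← measure_union _ (measurableSet_rect _ _ _ _), ← measure_union _ (measurableSet_rect _ _ _ _),
    ← measure_union _ (measurableSet_rect _ _ _ _)]
  · congr 1
    ext z
    simp only [mem_reProdIm, mem_union, mem_Ioc]
    grind
  all_goals
    rw [Set.disjoint_left]
    intro z
    simp only [mem_reProdIm, mem_union, mem_Ioc]
    grind

/-! ### Covers of the exceptional set and differentiability off it -/

/-- A set of zero `s`-dimensional Hausdorff measure has covers by balls of positive radii with
arbitrarily small `∑ r i ^ s`. -/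
lemma exists_cover {s : ℝ} (hs : 0 < s) {E : Set ℂ} (hE : Measure.hausdorffMeasure s E = 0)
    {η : ℝ} (hη : 0 < η) :
    ∃ (x : ℕ → ℂ) (r : ℕ → ℝ), (∀ i, 0 < r i) ∧ E ⊆ ⋃ i, Metric.closedBall (x i) (r i) ∧
      ∑' i, ENNReal.ofReal (r i ^ s) ≤ ENNReal.ofReal η := by
  rw [Measure.hausdorffMeasure_apply] at hE
  have h1 : (⨅ (t : ℕ → Set ℂ) (_ : E ⊆ ⋃ n, t n) (_ : ∀ n, Metric.ediam (t n) ≤ 1),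
          ∑' n, ⨆ _ : (t n).Nonempty, Metric.ediam (t n) ^ s) < ENNReal.ofReal (η / 2) := by
    refine lt_of_le_of_lt ?_ (ENNReal.ofReal_pos.2 (half_pos hη))
    rw [← hE]
    exact le_iSup₂_of_le (1 : ℝ≥0∞) one_pos le_rfl
  simp only [iInf_lt_iff] at h1
  obtain ⟨t, hcov, hdiam, hsum⟩ := h1
  obtain ⟨δ, hδ0, hδ⟩ := ENNReal.exists_pos_sum_of_countable
    (ENNReal.ofReal_pos.2 (half_pos hη)).ne' ℕ
  have hfin : ∀ i, Metric.ediam (t i) ≠ ⊤ := fun i => ne_top_of_le_ne_top ENNReal.one_ne_top (hdiam i)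
  have hpos : ∀ i, 0 < Metric.diam (t i) ^ s + δ i := fun i =>
    add_pos_of_nonneg_of_pos (Real.rpow_nonneg Metric.diam_nonneg _) (hδ0 i)
  classical
  let x : ℕ → ℂ := fun i => if h : (t i).Nonempty then h.some else 0
  -- The summable `δ i` keep the radii positive even where `t i` has diameter zero.
  refine ⟨x, fun i => (Metric.diam (t i) ^ s + δ i) ^ s⁻¹,
    fun i => Real.rpow_pos_of_pos (hpos i) _, ?_, ?_⟩
  · refine hcov.trans (iUnion_mono fun i y hy => ?_)
    have hne : (t i).Nonempty := ⟨y, hy⟩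
    have hx : x i ∈ t i := by simp only [x, hne, dif_pos]; exact hne.some_mem
    rw [Metric.mem_closedBall]
    refine (Metric.dist_le_diam_of_mem' (hfin i) hy hx).trans ?_
    calc Metric.diam (t i) = (Metric.diam (t i) ^ s) ^ s⁻¹ :=
          (Real.rpow_rpow_inv Metric.diam_nonneg hs.ne').symm
      _ ≤ _ := by
          refine Real.rpow_le_rpow (Real.rpow_nonneg Metric.diam_nonneg _) ?_ (inv_nonneg.2 hs.le)
          exact le_add_of_nonneg_right (δ i).coe_nonneg
  · calc ∑' i, ENNReal.ofReal (((Metric.diam (t i) ^ s + δ i) ^ s⁻¹) ^ s)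
        ≤ ∑' i, ((⨆ _ : (t i).Nonempty, Metric.ediam (t i) ^ s) + δ i) := by
          refine ENNReal.tsum_le_tsum fun i => ?_
          rw [Real.rpow_inv_rpow (hpos i).le hs.ne',
            ENNReal.ofReal_add (Real.rpow_nonneg Metric.diam_nonneg _) (δ i).coe_nonneg,
            ENNReal.ofReal_coe_nnreal]
          gcongr
          rcases (t i).eq_empty_or_nonempty with h | h
          · simp [h, Real.zero_rpow hs.ne']
          · rw [← ENNReal.ofReal_rpow_of_nonneg Metric.diam_nonneg hs.le, Metric.diam,
              ENNReal.ofReal_toReal (hfin i)]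
            exact le_iSup_of_le h le_rfl
      _ = _ := ENNReal.tsum_add
      _ ≤ ENNReal.ofReal (η / 2) + ENNReal.ofReal (η / 2) := add_le_add hsum.le hδ.le
      _ = _ := by rw [← ENNReal.ofReal_add (by positivity) (by positivity), add_halves]

/-- For continuous `f`, the first-order estimate at `x` on the dense set `U \ E` extends to a
neighbourhood of `x`. -/
lemma differentiableAt_off {f : ℂ → ℂ} {U E : Set ℂ} (hU : IsOpen U) (hE : Dense Eᶜ)
    (hc : ContinuousOn f U) (hd : DifferentiableOn ℂ f (U \ E)) {x : ℂ} (hx : x ∈ U \ E) :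
    DifferentiableAt ℂ f x := by
  obtain ⟨L, hL⟩ := hd x hx
  refine ⟨L, ?_⟩
  rw [hasFDerivAt_iff_isLittleO, Asymptotics.isLittleO_iff]
  rw [hasFDerivWithinAt_iff_isLittleO, Asymptotics.isLittleO_iff] at hL
  intro ε hε
  have := hL hε
  rw [Filter.Eventually, mem_nhdsWithin] at this
  obtain ⟨V, hVo, hxV, hV⟩ := this
  filter_upwards [(hVo.inter hU).mem_nhds ⟨hxV, hx.1⟩] with y hy
  have hcl : y ∈ closure ((V ∩ U) ∩ Eᶜ) := by
    exact hE.open_subset_closure_inter (hVo.inter hU) hy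
  have hcy : ContinuousWithinAt f ((V ∩ U) ∩ Eᶜ) y :=
    (hc y hy.2).mono fun z hz => hz.1.2
  have : (nhdsWithin y ((V ∩ U) ∩ Eᶜ)).NeBot := mem_closure_iff_nhdsWithin_neBot.1 hcl
  have l1 : Filter.Tendsto (fun z => ‖f z - f x - L (z - x)‖) (nhdsWithin y ((V ∩ U) ∩ Eᶜ))
      (nhds ‖f y - f x - L (y - x)‖) := by
    refine ((hcy.sub continuousWithinAt_const).sub ?_).norm
    exact (by fun_prop : Continuous fun z => L (z - x)).continuousWithinAt
  have l2 : Filter.Tendsto (fun z => ε * ‖z - x‖) (nhdsWithin y ((V ∩ U) ∩ Eᶜ))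
      (nhds (ε * ‖y - x‖)) :=
    (by fun_prop : Continuous fun z => ε * ‖z - x‖).continuousWithinAt
  refine le_of_tendsto_of_tendsto l1 l2 ?_
  filter_upwards [self_mem_nhdsWithin] with z hz
  exact hV ⟨hz.1.1, hz.1.2, hz.2⟩


/-! ### Vanishing of the integrals over rectangles -/

lemma norm_sub_le_of_mem {a b c d : ℝ} {z w : ℂ} (hz : z ∈ Icc a b ×ℂ Icc c d)
    (hw : w ∈ Icc a b ×ℂ Icc c d) : ‖w - z‖ ≤ (b - a) + (d - c) := by
  rw [mem_reProdIm] at hz hw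
  refine (norm_le_abs_re_add_abs_im _).trans (add_le_add ?_ ?_)
  · rw [sub_re]; exact abs_sub_le_of_le_of_le hw.1.1 hw.1.2 hz.1.1 hz.1.2
  · rw [sub_im]; exact abs_sub_le_of_le_of_le hw.2.1 hw.2.2 hz.2.1 hz.2.2

/-- The rectangle form of the removability theorem: the bisection argument with the measure `ν`. -/
lemma rectInt_eq_zero {α C : ℝ} (hα0 : 0 < α) (hα1 : α < 1) (hC : 0 ≤ C) {E : Set ℂ}
    (hE : Measure.hausdorffMeasure (1 + α) E = 0) {f : ℂ → ℂ} {a b c d : ℝ} (hab : a < b)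
    (hcd : c < d) (hcont : ContinuousOn f (Icc a b ×ℂ Icc c d))
    (hf : ∀ x ∈ Icc a b ×ℂ Icc c d, ∀ y ∈ Icc a b ×ℂ Icc c d, ‖f x - f y‖ ≤ C * ‖x - y‖ ^ α)
    (hd : ∀ x ∈ Icc a b ×ℂ Icc c d, x ∉ E → DifferentiableAt ℂ f x) :
    rectInt f a b c d = 0 := by
  set D := (b - a) + (d - c) with hD
  have hba : 0 < b - a := sub_pos.2 hab
  have hdc : 0 < d - c := sub_pos.2 hcd
  have hD0 : 0 < D := by positivity
  -- The ratio of area to squared half-perimeter, constant along the bisection.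
  set k := (b - a) * (d - c) / D ^ 2 with hk
  have hk0 : 0 < k := by positivity
  have harea : ∀ n : ℕ, (b - a) / 2 ^ n * ((d - c) / 2 ^ n) = k * (D / 2 ^ n) ^ 2 := by
    intro n; rw [hk]; field_simp
  set K := (b - a) * (d - c) + 2 * C / k * (9 * Real.pi) with hK
  have hK0 : 0 < K := by positivity
  suffices H : ∀ ε > 0, ‖rectInt f a b c d‖ ≤ ε * K by
    rw [← norm_le_zero_iff]
    refine le_of_forall_pos_le_add fun e he => ?_
    have := H (e / K) (by positivity)
    rwa [div_mul_cancel₀ _ hK0.ne', ← zero_add e] at this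
  intro ε hε
  -- The bound by `D ^ (1 + α)` forces `r i ≤ D`, so that some generation has size about `r i`.
  obtain ⟨x, r, hr0, hcov, hsum⟩ := exists_cover (by linarith : 0 < 1 + α) hE
    (lt_min hε (Real.rpow_pos_of_pos hD0 (1 + α)))
  have hrD : ∀ i, r i ≤ D := by
    intro i
    have h1 := (ENNReal.le_tsum i).trans hsum
    rw [ENNReal.ofReal_le_ofReal_iff (le_min hε.le (Real.rpow_nonneg hD0.le _))] at h1
    exact (Real.rpow_le_rpow_iff (hr0 i).le hD0.le (by linarith)).1 (h1.trans (min_le_right _ _))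
  let w : ℕ → ℝ := fun i => 2 * C / k * r i ^ (α - 1)
  have hw0 : ∀ i, 0 ≤ w i := fun i => mul_nonneg (by positivity) (Real.rpow_nonneg (hr0 i).le _)
  let ν : Measure ℂ := ENNReal.ofReal ε • volume + Measure.sum fun i =>
    ENNReal.ofReal (w i) • volume.restrict (Metric.closedBall (x i) (3 * r i))
  have hν1 : ∀ Q, ENNReal.ofReal ε * volume Q ≤ ν Q := by
    intro Q
    simp only [ν, Measure.coe_add, Pi.add_apply, Measure.smul_apply, smul_eq_mul]
    exact le_self_add
  have hν2 : ∀ i Q, MeasurableSet Q → Q ⊆ Metric.closedBall (x i) (3 * r i) →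
      ENNReal.ofReal (w i) * volume Q ≤ ν Q := by
    intro i Q hQ hsub
    simp only [ν, Measure.coe_add, Pi.add_apply, Measure.smul_apply, smul_eq_mul,
      Measure.sum_apply _ hQ, Measure.restrict_apply hQ]
    refine le_trans ?_ le_add_self
    refine le_trans ?_ (ENNReal.le_tsum i)
    rw [inter_eq_left.2 hsub]
  have hν3 : ν (Ioc a b ×ℂ Ioc c d) ≤ ENNReal.ofReal (ε * K) := by
    simp only [ν, Measure.coe_add, Pi.add_apply, Measure.smul_apply, smul_eq_mul,
      Measure.sum_apply _ (measurableSet_rect _ _ _ _)]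
    rw [hK, mul_add, ENNReal.ofReal_add (by positivity) (by positivity), volume_rect,
      ENNReal.ofReal_mul hε.le, ENNReal.ofReal_mul hba.le]
    gcongr
    calc _ ≤ ∑' i, ENNReal.ofReal (2 * C / k * (9 * Real.pi)) * ENNReal.ofReal (r i ^ (1 + α)) := by
          refine ENNReal.tsum_le_tsum fun i => ?_
          have hr := hr0 i
          have hvol : volume.restrict (Metric.closedBall (x i) (3 * r i)) (Ioc a b ×ℂ Ioc c d) ≤
              ENNReal.ofReal ((3 * r i) ^ 2 * Real.pi) := by
            rw [Measure.restrict_apply (measurableSet_rect _ _ _ _)]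
            refine (measure_mono inter_subset_right).trans ?_
            rw [Complex.volume_closedBall, ENNReal.ofReal_mul (sq_nonneg (3 * r i)),
              ENNReal.ofReal_pow (by positivity), ← NNReal.coe_real_pi, ENNReal.ofReal_coe_nnreal]
          refine (mul_le_mul_right hvol _).trans (le_of_eq ?_)
          rw [← ENNReal.ofReal_mul (hw0 i), ← ENNReal.ofReal_mul (by positivity)]
          congr 1
          simp only [w]
          rw [show 1 + α = (α - 1) + 2 by ring, Real.rpow_add hr, Real.rpow_two]
          ring
      _ = ENNReal.ofReal (2 * C / k * (9 * Real.pi)) * ∑' i, ENNReal.ofReal (r i ^ (1 + α)) :=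
          ENNReal.tsum_mul_left
      _ ≤ ENNReal.ofReal (2 * C / k * (9 * Real.pi)) * ENNReal.ofReal ε := by
          gcongr
          exact hsum.trans (ENNReal.ofReal_le_ofReal (min_le_left _ _))
      _ = _ := by rw [← ENNReal.ofReal_mul (by positivity), mul_comm]
  suffices H : ENNReal.ofReal ‖rectInt f a b c d‖ ≤ ν (Ioc a b ×ℂ Ioc c d) from
    (ENNReal.ofReal_le_ofReal_iff (by positivity)).1 (H.trans hν3)
  by_contra! hbad
  have sub : ∀ {a' b' c' d' : ℝ}, a ≤ a' → b' ≤ b → c ≤ c' → d' ≤ d →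
      Icc a' b' ×ℂ Icc c' d' ⊆ Icc a b ×ℂ Icc c d := fun h1 h2 h3 h4 z hz =>
    ⟨Icc_subset_Icc h1 h2 hz.1, Icc_subset_Icc h3 h4 hz.2⟩
  obtain ⟨p, q, hpq⟩ := bisect (fun a' b' c' d' => a ≤ a' ∧ b' ≤ b ∧ c ≤ c' ∧ d' ≤ d ∧
      ν (Ioc a' b' ×ℂ Ioc c' d') < ENNReal.ofReal ‖rectInt f a' b' c' d'‖) hab hcd
    ⟨le_rfl, le_rfl, le_rfl, le_rfl, hbad⟩ (by
      rintro a' b' c' d' hab' hcd' ⟨h1, h2, h3, h4, h5⟩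
      have i1 : a' ≤ (a' + b') / 2 := by linarith
      have i2 : (a' + b') / 2 ≤ b' := by linarith
      have i3 : c' ≤ (c' + d') / 2 := by linarith
      have i4 : (c' + d') / 2 ≤ d' := by linarith
      by_contra! hno
      obtain ⟨n1, n2, n3, n4⟩ := hno
      have n1 := n1 h1 (i2.trans h2) h3 (i4.trans h4)
      have n2 := n2 (h1.trans i1) h2 h3 (i4.trans h4)
      have n3 := n3 h1 (i2.trans h2) (h3.trans i3) h4
      have n4 := n4 (h1.trans i1) h2 (h3.trans i3) h4
      refine h5.not_ge ?_
      rw [measure_rect_split ν i1 i2 i3 i4,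
        rectInt_split i1 i2 i3 i4 (hcont.mono (sub h1 h2 h3 h4))]
      refine le_trans ?_ (add_le_add (add_le_add (add_le_add n1 n2) n3) n4)
      simp only [ofReal_norm]
      exact (enorm_add_le _ _).trans (add_le_add ((enorm_add_le _ _).trans
        (add_le_add (enorm_add_le _ _) le_rfl)) le_rfl))
  set z : ℂ := p + q * I with hz
  -- What failure of the inequality on the `n`-th rectangle gives, divided by its half-perimeter:
  -- `v` is any lower bound for the density of `ν` there, `M` the error of approximating `f` by `g`.
  have good : ∀ (n : ℕ), ∃ Q : Set ℂ, Q ⊆ Icc a b ×ℂ Icc c d ∧ z ∈ Q ∧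
      (∀ y ∈ Q, ‖y - z‖ ≤ D / 2 ^ n) ∧
      (∀ v : ℝ, 0 ≤ v → (∀ P, MeasurableSet P → P ⊆ Q → ENNReal.ofReal v * volume P ≤ ν P) →
        ∀ (g : ℂ → ℂ) (M : ℝ), Differentiable ℂ g → (∀ y ∈ Q, ‖f y - g y‖ ≤ M) →
        v * (k * (D / 2 ^ n)) < 2 * M) := by
    intro n
    obtain ⟨a', b', c', d', h1, h2, h3, h4, h5, h6, h7, h8, h9, h10, -, -, -, -, hB⟩ := hpq n
    have hzQ : z ∈ Icc a' b' ×ℂ Icc c' d' := by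
      rw [mem_reProdIm]; simp [hz, h2, h3, h6, h7]
    have hside : (b' - a') + (d' - c') = D / 2 ^ n := by rw [h9, h10, hD, add_div]
    refine ⟨_, sub h1 h4 h5 h8, hzQ, fun y hy => hside ▸ norm_sub_le_of_mem hzQ hy, ?_⟩
    intro v hv hP g M hg hM
    have e1 := norm_rectInt_le (h2.trans h3) (h6.trans h7) (hcont.mono (sub h1 h4 h5 h8)) hg hM
    have e2 := (hP _ (measurableSet_rect a' b' c' d')
      (fun y hy => ⟨Ioc_subset_Icc_self hy.1, Ioc_subset_Icc_self hy.2⟩)).trans_lt hB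
    have hb' : 0 ≤ b' - a' := by rw [h9]; positivity
    rw [volume_rect, ← ENNReal.ofReal_mul hb', ← ENNReal.ofReal_mul hv] at e2
    have e3 := (ENNReal.ofReal_lt_ofReal_iff_of_nonneg (by rw [h9, h10]; positivity)).1 e2
    rw [hside] at e1
    rw [h9, h10, harea] at e3
    have ht : 0 < D / 2 ^ n := by positivity
    refine lt_of_mul_lt_mul_right ?_ ht.le
    calc _ = v * (k * (D / 2 ^ n) ^ 2) := by ring
      _ < _ := e3.trans_le e1
  have hzR : z ∈ Icc a b ×ℂ Icc c d := by
    obtain ⟨Q, hQ, hzQ, -⟩ := good 0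
    exact hQ hzQ
  by_cases hzE : z ∈ E
  · obtain ⟨i, hi⟩ := mem_iUnion.1 (hcov hzE)
    obtain ⟨n, hn1, hn2⟩ := exists_nat_pow_near (x := D / r i) (y := (2 : ℝ))
      ((one_le_div (hr0 i)).2 (hrD i)) one_lt_two
    have hr : 0 < r i := hr0 i
    have t1 : r i ≤ D / 2 ^ n := by
      rw [le_div_iff₀ (by positivity), mul_comm]; rwa [le_div_iff₀ hr] at hn1
    have t2 : D / 2 ^ n ≤ 2 * r i := by
      rw [div_lt_iff₀ hr] at hn2
      rw [div_le_iff₀ (by positivity)]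
      calc D ≤ _ := hn2.le
        _ = _ := by rw [pow_succ]; ring
    obtain ⟨Q, hQ, hzQ, hdist, hmain⟩ := good n
    have ht : 0 < D / 2 ^ n := by positivity
    have := hmain (w i) (hw0 i) (fun P hP hPQ => hν2 i P hP fun y hy => by
        rw [Metric.mem_closedBall] at hi ⊢
        have := hdist y (hPQ hy)
        rw [← dist_eq_norm] at this
        linarith [dist_triangle y z (x i)]) (fun _ => f z) (C * (D / 2 ^ n) ^ α)
        (differentiable_const _) (fun y hy => (hf y (hQ hy) z hzR).trans (by
          gcongr
          exact hdist y hy))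
    refine this.not_ge ?_
    -- Here `α < 1` enters: `t ↦ t ^ (α - 1)` is decreasing.
    have hmono : (D / 2 ^ n) ^ (α - 1) ≤ r i ^ (α - 1) :=
      Real.rpow_le_rpow_of_nonpos hr t1 (by linarith)
    calc 2 * (C * (D / 2 ^ n) ^ α) = 2 * C * (D / 2 ^ n) ^ (α - 1) * (D / 2 ^ n) := by
          rw [Real.rpow_sub_one ht.ne']; field_simp
      _ ≤ 2 * C * r i ^ (α - 1) * (D / 2 ^ n) := by gcongr
      _ = w i * (k * (D / 2 ^ n)) := by simp only [w]; field_simp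
  · obtain ⟨L, hL⟩ := hd z hzR hzE
    rw [hasFDerivAt_iff_isLittleO, Asymptotics.isLittleO_iff] at hL
    obtain ⟨δ, hδ, hball⟩ := Metric.eventually_nhds_iff.1 (hL (c := ε * k / 2) (by positivity))
    obtain ⟨n, hn⟩ := exists_pow_lt_of_lt_one (div_pos hδ hD0) (by norm_num : (1 / 2 : ℝ) < 1)
    have hn' : D / 2 ^ n < δ := by
      rw [one_div, inv_pow, lt_div_iff₀ hD0] at hn
      rwa [div_eq_inv_mul]
    obtain ⟨Q, hQ, hzQ, hdist, hmain⟩ := good n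
    have := hmain ε hε.le (fun P _ _ => hν1 P) (fun y => f z + L (y - z))
      (ε * k / 2 * (D / 2 ^ n)) (by fun_prop) (fun y hy => by
        rw [← sub_sub]
        refine (hball ?_).trans ?_
        · rw [dist_eq_norm]; exact (hdist y hy).trans_lt hn'
        · gcongr; exact hdist y hy)
    linarith

lemma rectInt_swap_re (f : ℂ → ℂ) (a b c d : ℝ) : rectInt f b a c d = -rectInt f a b c d := by
  simp only [rectInt, intervalIntegral.integral_symm a b]; ring

lemma rectInt_swap_im (f : ℂ → ℂ) (a b c d : ℝ) : rectInt f a b d c = -rectInt f a b c d := by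
  simp only [rectInt, intervalIntegral.integral_symm c d]; ring

end HolderRemovable
end

/-! ### Removability -/

/-- Sets of zero `(1+α)`-dimensional Hausdorff measure are removable for functions
that are Hölder continuous of exponent `α` on `U` and holomorphic off the set. -/
theorem stmt_11 (α : ℝ) (hα0 : 0 < α) (hα1 : α < 1)
    (U : Set ℂ) (hU : IsOpen U) (E : Set ℂ)
    (hE : MeasureTheory.Measure.hausdorffMeasure (1 + α) E = 0) (f : ℂ → ℂ)
    (hf : ∃ C : ℝ, 0 ≤ C ∧ ∀ x ∈ U, ∀ y ∈ U, ‖f x - f y‖ ≤ C * ‖x - y‖ ^ α)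
    (hd : DifferentiableOn ℂ f (U \ E)) :
    DifferentiableOn ℂ f U := by
  obtain ⟨C, hC, hf⟩ := hf
  have hcont : ContinuousOn f U := by
    have : HolderOnWith C.toNNReal α.toNNReal f U := by
      intro x hx y hy
      have := hf x hx y hy
      rw [edist_dist, edist_dist, dist_eq_norm, dist_eq_norm, Real.coe_toNNReal _ hα0.le,
        ENNReal.ofReal_rpow_of_nonneg (norm_nonneg _) hα0.le]
      exact (ENNReal.ofReal_le_ofReal this).trans (ENNReal.ofReal_mul hC).le
    exact this.continuousOn (Real.toNNReal_pos.2 hα0)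
  have hdense : Dense Eᶜ := by
    refine dense_compl_of_dimH_lt_finrank ?_
    have h1 : dimH E ≤ ((1 + α).toNNReal : ENNReal) :=
      dimH_le_of_hausdorffMeasure_ne_top (by
        rw [Real.coe_toNNReal _ (by linarith), hE]; exact ENNReal.zero_ne_top)
    refine h1.trans_lt ?_
    rw [Complex.finrank_real_complex]
    norm_cast
    rw [Real.toNNReal_lt_iff_lt_coe (by linarith)]
    push_cast
    linarith
  rw [← Complex.isConservativeOn_and_continuousOn_iff_isDifferentiableOn hU]
  refine ⟨fun z w hzw => ?_, hcont⟩
  rw [← add_eq_zero_iff_eq_neg, Complex.wedgeIntegral_add_wedgeIntegral_eq]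
  change HolderRemovable.rectInt f z.re w.re z.im w.im = 0
  have main : ∀ {a b c d : ℝ}, a < b → c < d → Icc a b ×ℂ Icc c d ⊆ U →
      HolderRemovable.rectInt f a b c d = 0 := fun hab hcd hs =>
    HolderRemovable.rectInt_eq_zero hα0 hα1 hC hE hab hcd (hcont.mono hs)
      (fun x hx y hy => hf x (hs hx) y (hs hy))
      (fun x hx hxE => HolderRemovable.differentiableAt_off hU hdense hcont hd ⟨hs hx, hxE⟩)
  unfold Complex.Rectangle at hzw
  -- `IsConservativeOn` ranges over all pairs of opposite corners, in any order.
  rcases lt_trichotomy z.re w.re with h1 | h1 | h1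
  · rw [uIcc_of_lt h1] at hzw
    rcases lt_trichotomy z.im w.im with h2 | h2 | h2
    · rw [uIcc_of_lt h2] at hzw
      exact main h1 h2 hzw
    · simp [HolderRemovable.rectInt, h2]
    · rw [uIcc_of_gt h2] at hzw
      rw [HolderRemovable.rectInt_swap_im, main h1 h2 hzw, neg_zero]
  · simp [HolderRemovable.rectInt, h1]
  · rw [uIcc_of_gt h1] at hzw
    rw [HolderRemovable.rectInt_swap_re, neg_eq_zero]
    rcases lt_trichotomy z.im w.im with h2 | h2 | h2
    · rw [uIcc_of_lt h2] at hzw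
      exact main h1 h2 hzw
    · simp [HolderRemovable.rectInt, h2]
    · rw [uIcc_of_gt h2] at hzw
      rw [HolderRemovable.rectInt_swap_im, main h1 h2 hzw, neg_zero]
end

section
/- Let φ : ℂ → ℂ be continuously differentiable in the real sense (C¹ as a function of two real variables) with compact support, and define the Cauchy transform u : ℂ → ℂ by u(z) = (1/π) ∫_ℂ φ(w)/(z − w) dA(w), where dA is Lebesgue measure on ℂ ≅ ℝ². Then u is real differentiable at every point z ∈ ℂ and satisfies the ∂̄-equation: (Du(z))(1) + i·(Du(z))(i) = 2·φ(z) for all z ∈ ℂ, where Du(z) denotes the real Fréchet derivative of u at z. -/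
/-!
Substituting `w ↦ z - w`, the Cauchy transform is `π⁻¹` times the convolution of the locally
integrable kernel `w⁻¹` with `φ`, so it is differentiable and the derivative falls on `φ`
(`HasCompactSupport.hasFDerivAt_convolution_right`). It remains to show
`∫ w⁻¹ (Dφ(z - w) 1 + i Dφ(z - w) i) dA(w) = 2π φ(z)`
(`integral_inv_mul_dbar`). In polar coordinates `w = r e`, `e = exp (iθ)`, the integrand times the
Jacobian `r` is `Dφ(z - r e) e + i Dφ(z - r e) (i e)`. The first term is `-∂/∂r` of `φ (z - r e)`
and integrates to `φ z` along every ray (`integral_radial`); the second is a multiple of the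
`θ`-derivative of the same function and integrates to `0` over every circle (`integral_angular`).
-/

open MeasureTheory

/-- The integrability that makes Fubini's theorem and linearity available in polar coordinates;
`c` is `1` for the radial and `i` for the angular derivative. -/
lemma integrableOn_polar (φ : ℂ → ℂ) (hφ : ContDiff ℝ 1 φ) (z c : ℂ) (R : ℝ)
    (hR : ∀ r θ : ℝ, R < r → fderiv ℝ φ (z - r * Complex.exp (θ * Complex.I)) = 0) :
    IntegrableOn (fun p : ℝ × ℝ => fderiv ℝ φ (z - p.1 * Complex.exp (p.2 * Complex.I))
      (c * Complex.exp (p.2 * Complex.I))) (Set.Ioi 0 ×ˢ Set.Ioo (-Real.pi) Real.pi) := by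
  have hcont : Continuous (fun p : ℝ × ℝ => fderiv ℝ φ (z - p.1 * Complex.exp (p.2 * Complex.I))
      (c * Complex.exp (p.2 * Complex.I))) := by
    have h := hφ.continuous_fderiv one_ne_zero
    exact (h.comp (by fun_prop)).clm_apply (by fun_prop)
  have hK : IsCompact (Set.Icc 0 R ×ˢ Set.Icc (-Real.pi) Real.pi) :=
    isCompact_Icc.prod isCompact_Icc
  refine (hcont.continuousOn.integrableOn_compact hK).of_forall_sdiff_eq_zero
    (measurableSet_Ioi.prod measurableSet_Ioo) ?_
  rintro ⟨r, θ⟩ ⟨⟨hr, hθ⟩, hn⟩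
  have hlt : R < r := by
    by_contra h
    exact hn ⟨⟨le_of_lt hr, not_lt.1 h⟩, ⟨hθ.1.le, hθ.2.le⟩⟩
  simp [hR r θ hlt]

lemma integral_radial (φ : ℂ → ℂ) (hφ : ContDiff ℝ 1 φ) (z : ℂ) (R θ : ℝ)
    (hR : ∀ r : ℝ, R < r → φ (z - r * Complex.exp (θ * Complex.I)) = 0)
    (hR' : ∀ r : ℝ, R < r → fderiv ℝ φ (z - r * Complex.exp (θ * Complex.I)) = 0) :
    ∫ r in Set.Ioi (0 : ℝ), fderiv ℝ φ (z - r * Complex.exp (θ * Complex.I))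
      (Complex.exp (θ * Complex.I)) = φ z := by
  set e := Complex.exp (θ * Complex.I)
  have hd : ∀ r : ℝ, HasDerivAt (fun r : ℝ => -φ (z - r * e)) (fderiv ℝ φ (z - r * e) e) r := by
    intro r
    have h1 : HasDerivAt (fun r : ℝ => z - r * e) (-e) r := by
      simpa using (((hasDerivAt_id r).ofReal_comp).mul_const e).const_sub z
    have h2 := ((hφ.differentiable one_ne_zero) (z - r * e)).hasFDerivAt.comp_hasDerivAt r h1
    have h3 := h2.neg
    rw [map_neg, neg_neg] at h3
    exact h3
  have hcont : Continuous (fun r : ℝ => fderiv ℝ φ (z - r * e) e) :=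
    ((hφ.continuous_fderiv one_ne_zero).comp (by fun_prop)).clm_apply continuous_const
  have hint : IntegrableOn (fun r : ℝ => fderiv ℝ φ (z - r * e) e) (Set.Ioi 0) := by
    refine (hcont.continuousOn.integrableOn_compact
      (isCompact_Icc (a := 0) (b := R))).of_forall_sdiff_eq_zero measurableSet_Ioi ?_
    rintro r ⟨hr, hn⟩
    have hlt : R < r := by
      by_contra h
      exact hn ⟨le_of_lt hr, not_lt.1 h⟩
    simp [hR' r hlt]
  have hlim : Filter.Tendsto (fun r : ℝ => -φ (z - r * e)) Filter.atTop (nhds 0) := by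
    refine tendsto_const_nhds.congr' ?_
    filter_upwards [Filter.eventually_gt_atTop R] with r hr
    simp [hR r hr]
  have := integral_Ioi_of_hasDerivAt_of_tendsto' (fun r _ => hd r) hint hlim
  simpa using this

lemma integral_angular (φ : ℂ → ℂ) (hφ : ContDiff ℝ 1 φ) (z : ℂ) (r : ℝ) (hr : r ≠ 0) :
    ∫ θ in Set.Ioo (-Real.pi) Real.pi, fderiv ℝ φ (z - r * Complex.exp (θ * Complex.I))
      (Complex.I * Complex.exp (θ * Complex.I)) = 0 := by
  have hd : ∀ θ : ℝ, HasDerivAt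
      (fun θ : ℝ => (-r⁻¹) • φ (z - r * Complex.exp (θ * Complex.I)))
      (fderiv ℝ φ (z - r * Complex.exp (θ * Complex.I))
        (Complex.I * Complex.exp (θ * Complex.I))) θ := by
    intro θ
    have h1 : HasDerivAt (fun θ : ℝ => z - r * Complex.exp (θ * Complex.I))
        ((-r) • (Complex.I * Complex.exp (θ * Complex.I))) θ := by
      have := ((((hasDerivAt_id θ).ofReal_comp.mul_const Complex.I).cexp).const_mul
        (r : ℂ)).const_sub z
      have heq : (-r) • (Complex.I * Complex.exp (θ * Complex.I)) =
          -(r * (Complex.exp (θ * Complex.I) * ((1 : ℝ) * Complex.I))) := by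
        rw [Complex.real_smul]
        push_cast
        ring
      rw [heq]
      exact this
    have h2 := ((hφ.differentiable one_ne_zero) _).hasFDerivAt.comp_hasDerivAt θ h1
    have h3 := h2.const_smul (-r⁻¹)
    rw [map_smul, smul_smul, neg_mul_neg, inv_mul_cancel₀ hr, one_smul] at h3
    exact h3
  have hcont : Continuous (fun θ : ℝ => fderiv ℝ φ (z - r * Complex.exp (θ * Complex.I))
      (Complex.I * Complex.exp (θ * Complex.I))) :=
    ((hφ.continuous_fderiv one_ne_zero).comp (by fun_prop)).clm_apply (by fun_prop)
  rw [← integral_Ioc_eq_integral_Ioo, ← intervalIntegral.integral_of_le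
    (by linarith [Real.pi_pos]), intervalIntegral.integral_eq_sub_of_hasDerivAt
    (fun θ _ => hd θ) (hcont.intervalIntegrable _ _)]
  simp [Complex.exp_neg, Complex.exp_pi_mul_I]

/-- The Cauchy–Pompeiu formula for a compactly supported `C¹` function. -/
lemma integral_inv_mul_dbar (φ : ℂ → ℂ) (hφ : ContDiff ℝ 1 φ) (hsupp : HasCompactSupport φ)
    (z : ℂ) :
    ∫ w : ℂ, w⁻¹ * (fderiv ℝ φ (z - w) 1 + Complex.I * fderiv ℝ φ (z - w) Complex.I)
      = 2 * Real.pi * φ z := by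
  obtain ⟨R₀, hR₀⟩ := (hsupp.isCompact.isBounded).subset_closedBall 0
  have hmem : ∀ r θ : ℝ, R₀ + ‖z‖ < r → z - r * Complex.exp (θ * Complex.I) ∉ tsupport φ := by
    intro r θ hr hmem
    have h1 := hR₀ hmem
    rw [mem_closedBall_zero_iff] at h1
    have h2 : ‖(r : ℂ) * Complex.exp (θ * Complex.I)‖ = |r| := by
      simp [Complex.norm_exp_ofReal_mul_I]
    have h3 := norm_sub_norm_le ((r : ℂ) * Complex.exp (θ * Complex.I)) z
    rw [norm_sub_rev, h2] at h3
    linarith [le_abs_self r]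
  have hR : ∀ r θ : ℝ, R₀ + ‖z‖ < r → φ (z - r * Complex.exp (θ * Complex.I)) = 0 :=
    fun r θ h => image_eq_zero_of_notMem_tsupport (hmem r θ h)
  have hR' : ∀ r θ : ℝ, R₀ + ‖z‖ < r →
      fderiv ℝ φ (z - r * Complex.exp (θ * Complex.I)) = 0 :=
    fun r θ h => image_eq_zero_of_notMem_tsupport
      (fun h' => hmem r θ h (tsupport_fderiv_subset ℝ h'))
  have hA := integrableOn_polar φ hφ z 1 _ hR'
  have hB := integrableOn_polar φ hφ z Complex.I _ hR'
  simp only [one_mul] at hA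
  rw [← Complex.integral_comp_polarCoord_symm]
  have hcongr : ∀ p ∈ polarCoord.target,
      p.1 • ((Complex.polarCoord.symm p)⁻¹ *
        (fderiv ℝ φ (z - Complex.polarCoord.symm p) 1 +
          Complex.I * fderiv ℝ φ (z - Complex.polarCoord.symm p) Complex.I)) =
      fderiv ℝ φ (z - p.1 * Complex.exp (p.2 * Complex.I)) (Complex.exp (p.2 * Complex.I)) +
        Complex.I * fderiv ℝ φ (z - p.1 * Complex.exp (p.2 * Complex.I))
          (Complex.I * Complex.exp (p.2 * Complex.I)) := by
    rintro ⟨r, θ⟩ ⟨hr, -⟩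
    have hr0 : (r : ℂ) ≠ 0 := by exact_mod_cast (ne_of_gt hr)
    have hsymm : Complex.polarCoord.symm (r, θ) = r * Complex.exp (θ * Complex.I) := by
      simp [Complex.exp_mul_I]
    simp only [hsymm]
    generalize fderiv ℝ φ (z - r * Complex.exp (θ * Complex.I)) = L
    -- An `ℝ`-linear `L` satisfies `L e + i L (i e) = conj e * (L 1 + i L i)`, and `conj e = e⁻¹`.
    have hL : ∀ a b : ℝ, L (a + b * Complex.I) = a * L 1 + b * L Complex.I := by
      intro a b
      have : ((a : ℂ) + b * Complex.I) = a • (1 : ℂ) + b • Complex.I := by simp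
      rw [this, map_add, map_smul, map_smul]
      simp
    have he : Complex.exp (θ * Complex.I) =
        (Real.cos θ : ℝ) + (Real.sin θ : ℝ) * Complex.I := by
      simp [Complex.exp_mul_I]
    have hie : Complex.I * Complex.exp (θ * Complex.I) =
        ((-Real.sin θ : ℝ) : ℂ) + (Real.cos θ : ℝ) * Complex.I := by
      rw [he]
      push_cast
      linear_combination (Complex.sin θ) * Complex.I_mul_I
    have hinv : (Complex.exp (θ * Complex.I))⁻¹ =
        (Real.cos θ : ℝ) - (Real.sin θ : ℝ) * Complex.I := by
      rw [← Complex.exp_neg, ← neg_mul, Complex.exp_mul_I]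
      simp
      ring
    rw [mul_inv, hinv, hie, he, hL, hL, Complex.real_smul]
    field_simp
    push_cast
    linear_combination (-Complex.sin θ * L Complex.I) * Complex.I_sq
  rw [setIntegral_congr_fun polarCoord.open_target.measurableSet hcongr]
  rw [show polarCoord.target = Set.Ioi (0 : ℝ) ×ˢ Set.Ioo (-Real.pi) Real.pi from rfl,
    integral_add hA (hB.const_mul Complex.I), integral_const_mul]
  have hBz : ∫ p in Set.Ioi (0 : ℝ) ×ˢ Set.Ioo (-Real.pi) Real.pi,
      fderiv ℝ φ (z - p.1 * Complex.exp (p.2 * Complex.I))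
        (Complex.I * Complex.exp (p.2 * Complex.I)) = 0 := by
    rw [Measure.volume_eq_prod] at hB ⊢
    rw [setIntegral_prod _ hB]
    refine setIntegral_eq_zero_of_forall_eq_zero fun r hr => ?_
    exact integral_angular φ hφ z r (ne_of_gt hr)
  have hAz : ∫ p in Set.Ioi (0 : ℝ) ×ˢ Set.Ioo (-Real.pi) Real.pi,
      fderiv ℝ φ (z - p.1 * Complex.exp (p.2 * Complex.I))
        (Complex.exp (p.2 * Complex.I)) = 2 * Real.pi * φ z := by
    rw [Measure.volume_eq_prod] at hA ⊢
    rw [← setIntegral_prod_swap]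
    refine (setIntegral_prod _ hA.swap).trans ?_
    simp only [Function.comp_apply, Prod.swap_prod_mk]
    rw [setIntegral_congr_fun measurableSet_Ioo (g := fun _ => φ z) fun θ _ =>
      integral_radial φ hφ z _ θ (fun r => hR r θ) (fun r => hR' r θ)]
    rw [setIntegral_const, Measure.real, Real.volume_Ioo,
      ENNReal.toReal_ofReal (by linarith [Real.pi_pos]), Complex.real_smul]
    push_cast
    ring
  rw [hAz, hBz, mul_zero, add_zero]

lemma locallyIntegrable_inv : LocallyIntegrable (fun w : ℂ => w⁻¹) := by
  refine locallyIntegrable_of_norm_le_rpow (C := 1) (α := 1) ?_ ?_ ?_ ?_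
  · simp [Complex.finrank_real_complex]
  · simp [Complex.finrank_real_complex]
  · exact Filter.Eventually.of_forall fun w => by simp [Real.rpow_neg_one]
  · exact measurable_inv.aestronglyMeasurable

/-- The Cauchy transform `u(z) = (1/π) ∫ φ(w)/(z-w) dA(w)` of a compactly supported
`C¹` function `φ` is real differentiable everywhere and solves the `∂̄`-equation
`∂̄u = φ`, i.e. `(Du z) 1 + i (Du z) i = 2 φ z`. -/
theorem stmt_12 (φ : ℂ → ℂ) (hφ : ContDiff ℝ 1 φ) (hsupp : HasCompactSupport φ)
    (u : ℂ → ℂ)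
    (hu : ∀ z : ℂ, u z = (Real.pi : ℂ)⁻¹ * ∫ w : ℂ, φ w / (z - w) ∂volume) :
    ∀ z : ℂ, ∃ D : ℂ →L[ℝ] ℂ, HasFDerivAt u D z ∧
      D 1 + Complex.I * D Complex.I = 2 * φ z := by
  intro z
  set L := ContinuousLinearMap.mul ℝ ℂ
  have hfc := hsupp.fderiv ℝ
  have hfcont := hφ.continuous_fderiv one_ne_zero
  have hconv := (hsupp.hasFDerivAt_convolution_right L locallyIntegrable_inv hφ z).const_mul
    (Real.pi : ℂ)⁻¹
  have hu' : u = fun x => (Real.pi : ℂ)⁻¹ * convolution (fun w : ℂ => w⁻¹) φ L volume x := by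
    funext x
    rw [hu, convolution_def, ← integral_sub_left_eq_self _ volume x]
    simp [L, div_eq_inv_mul]
  rw [← hu'] at hconv
  refine ⟨_, hconv, ?_⟩
  have hex : ∀ v : ℂ, Integrable (fun w : ℂ => w⁻¹ * fderiv ℝ φ (z - w) v) := fun v =>
    (hfc.comp_left (g := fun T : ℂ →L[ℝ] ℂ => T v) rfl).convolutionExists_right L
      locallyIntegrable_inv (hfcont.clm_apply continuous_const) z
  have hkey := integral_inv_mul_dbar φ hφ hsupp z
  simp only [mul_add, mul_left_comm _ Complex.I] at hkey
  rw [integral_add (hex 1) ((hex Complex.I).const_mul _), integral_const_mul] at hkey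
  have happ : ∀ v : ℂ, (convolution (fun w : ℂ => w⁻¹) (fderiv ℝ φ) (L.precompR ℂ) volume z) v =
      ∫ w : ℂ, w⁻¹ * fderiv ℝ φ (z - w) v := fun v => by
    rw [convolution_precompR_apply L locallyIntegrable_inv hfc hfcont, convolution_def]
    rfl
  have hpi : (Real.pi : ℂ) ≠ 0 := by exact_mod_cast Real.pi_ne_zero
  simp only [smul_apply, happ, smul_eq_mul]
  rw [mul_left_comm, ← mul_add, hkey]
  field_simp
end

section
/- Let φ : ℂ → ℂ be continuously differentiable in the real sense (C¹ as a function of two real variables) with compact support, and define the Cauchy transform u : ℂ → ℂ by u(z) = (1/π) ∫_ℂ φ(w)/(z − w) dA(w), where dA is Lebesgue measure on ℂ ≅ ℝ². Then u is complex differentiable at every point of the complement of the closed support of φ, and u(z) tends to 0 as |z| → ∞ (i.e., u tends to 0 along the cocompact filter on ℂ). -/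
/-!
Both claims follow from dominated convergence, since the kernel `1 / (z - w)` is harmless when `z`
stays away from the support of `φ`. If `z` has distance at least `2δ` from the support, then for `x`
within `δ` of `z` the `x`-derivative `-φ w / (x - w) ^ 2` of the integrand is bounded by
`‖φ w‖ / δ ^ 2`, so one may differentiate under the integral. If the support lies in the ball of
radius `R`, then for `‖z‖ ≥ R + 1` the integrand is bounded by `‖φ w‖` and tends to `0` pointwise as
`z → ∞`.
-/

open MeasureTheory Filter

/-- The Cauchy transform `u(z) = (1/π) ∫ φ(w)/(z-w) dA(w)` of a compactly supported
`C¹` function `φ` is holomorphic off the closed support of `φ` and tends to `0` at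
infinity. -/
theorem stmt_13 (φ : ℂ → ℂ) (hφ : ContDiff ℝ 1 φ) (hsupp : HasCompactSupport φ)
    (u : ℂ → ℂ)
    (hu : ∀ z : ℂ, u z = (Real.pi : ℂ)⁻¹ * ∫ w : ℂ, φ w / (z - w) ∂volume) :
    (∀ z ∈ (tsupport φ)ᶜ, DifferentiableAt ℂ u z) ∧
      Tendsto u (cocompact ℂ) (nhds 0) := by
  obtain rfl : u = fun z => (Real.pi : ℂ)⁻¹ * ∫ w : ℂ, φ w / (z - w) ∂volume := funext hu
  have hcont : Continuous φ := hφ.continuous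
  have hint : Integrable φ := hcont.integrable_of_hasCompactSupport hsupp
  have hmeas : ∀ z : ℂ, AEStronglyMeasurable (fun w => φ w / (z - w)) volume := fun z =>
    (hcont.measurable.div (measurable_const.sub measurable_id)).aestronglyMeasurable
  constructor
  · intro z hz
    obtain ⟨ε, hε, hball⟩ := Metric.isOpen_iff.1 (isClosed_tsupport φ).isOpen_compl z hz
    obtain ⟨δ, hδ, rfl⟩ : ∃ δ > 0, ε = 2 * δ := ⟨ε / 2, by positivity, by ring⟩
    have hdist : ∀ w, φ w ≠ 0 → ∀ x ∈ Metric.ball z δ, δ ≤ ‖x - w‖ := by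
      intro w hw x hx
      by_contra! hlt
      refine hball (?_ : w ∈ Metric.ball z (2 * δ)) (subset_tsupport φ hw)
      rw [Metric.mem_ball] at hx ⊢
      rw [← dist_eq_norm] at hlt
      linarith [dist_triangle w x z, dist_comm w x]
    have hF_int : Integrable (fun w => φ w / (z - w)) := by
      refine (hint.norm.div_const δ).mono' (hmeas z) (ae_of_all _ fun w => ?_)
      by_cases hw : φ w = 0
      · simp [hw]
      · rw [norm_div]
        gcongr
        exact hdist w hw z (Metric.mem_ball_self hδ)
    refine DifferentiableAt.const_mul ?_ _
    refine (hasDerivAt_integral_of_dominated_loc_of_deriv_le (μ := volume)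
      (F := fun x w => φ w / (x - w)) (F' := fun x w => -φ w / (x - w) ^ 2)
      (bound := fun w => ‖φ w‖ / δ ^ 2) (Metric.ball_mem_nhds z hδ)
      (Eventually.of_forall hmeas) hF_int ?_ ?_ (hint.norm.div_const _) ?_).2.differentiableAt
    · exact (hcont.measurable.neg.div
        ((measurable_const.sub measurable_id).pow_const 2)).aestronglyMeasurable
    · refine ae_of_all _ fun w x hx => ?_
      by_cases hw : φ w = 0
      · simp [hw]
      · rw [norm_div, norm_neg, norm_pow]
        gcongr
        exact hdist w hw x hx
    · refine ae_of_all _ fun w x hx => ?_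
      by_cases hw : φ w = 0
      · simpa [hw] using hasDerivAt_const x (0 : ℂ)
      · have hne : x - w ≠ 0 := norm_pos_iff.1 (hδ.trans_le (hdist w hw x hx))
        have hd := (hasDerivAt_const x (φ w)).div ((hasDerivAt_id x).sub_const w) hne
        simp only [id, zero_mul, mul_one, zero_sub] at hd
        exact hd
  · obtain ⟨R, hR⟩ := hsupp.isCompact.isBounded.exists_norm_le
    have : (cocompact ℂ).IsCountablyGenerated := by
      rw [← Metric.cobounded_eq_cocompact, ← comap_norm_atTop]
      infer_instance
    have hlim : Tendsto (fun z : ℂ => ∫ w : ℂ, φ w / (z - w)) (cocompact ℂ)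
        (nhds (∫ _ : ℂ, (0 : ℂ))) := by
      refine tendsto_integral_filter_of_dominated_convergence (fun w => ‖φ w‖)
        (Eventually.of_forall hmeas) ?_ hint.norm (ae_of_all _ fun w => ?_)
      · filter_upwards [(tendsto_norm_cocompact_atTop (E := ℂ)).eventually_ge_atTop (R + 1)]
          with z hz
        refine ae_of_all _ fun w => ?_
        by_cases hw : φ w = 0
        · simp [hw]
        · have h1 : 1 ≤ ‖z - w‖ := by
            linarith [norm_sub_norm_le z w, hR w (subset_tsupport φ hw)]
          rw [norm_div]
          exact div_le_self (norm_nonneg _) h1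
      · have hinv : Tendsto (fun z : ℂ => z⁻¹) (cocompact ℂ) (nhds 0) := by
          rw [← Metric.cobounded_eq_cocompact]
          exact tendsto_inv₀_cobounded
        have hsub : Tendsto (fun z : ℂ => z - w) (cocompact ℂ) (cocompact ℂ) :=
          (Homeomorph.subRight w).isClosedEmbedding.tendsto_cocompact
        simpa [div_eq_mul_inv] using (hinv.comp hsub).const_mul (φ w)
    simpa using hlim.const_mul (Real.pi : ℂ)⁻¹
end

section
/- Let U be a nonempty bounded open subset of ℂ, let g : ℂ → ℂ be continuous on the closure of U and complex differentiable at every point of U, and let h : ℂ → ℂ be continuously differentiable in the real sense (C¹ as a function of two real variables). Then there exists a function u : ℂ → ℂ, continuous on all of ℂ, such that z ↦ g(z)·h(z) − u(z) is complex differentiable at every point of U, u is complex differentiable at every point of the complement of the closure of U, and u(z) tends to 0 as |z| → ∞. -/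
open Filter

/-!
With `φ = 1_U · g · ∂̄h`, the correction is the Cauchy transform
`u(z) = (1/π) ∫ φ(w) / (z - w) dA(w)`. As `φ` is bounded with bounded support and `1/w` is locally
integrable on the plane, `u` is a uniform limit of integrals against truncated continuous kernels,
hence continuous (`continuous_cauchyT`). It vanishes at infinity (`tendsto_cauchyT`), and it is
holomorphic near every point around which `φ` vanishes, by differentiation under the integral sign
(`differentiableAt_cauchyT`); this settles the complement of `closure U`.

For `z₀ ∈ U`, the density `φ` is merely continuous near `z₀`, so `u` itself need not be `C¹` there
and `∂̄u = φ` is not computed by differentiating. Instead, let `χ` be a bump function equal to `1`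
near `z₀` and supported in `U`, and put `F = χ g h`, a compactly supported `C¹` function. The
Cauchy–Pompeiu formula (`cauchyT_dbar`) says that `F` is the Cauchy transform of `∂̄F`, so `F - u`
is the Cauchy transform of `∂̄F - φ`. Near `z₀` one has `F = g h` and `∂̄F = g ∂̄h = φ`, so this
density vanishes there, and `g h - u = F - u` is holomorphic at `z₀`.

The Cauchy–Pompeiu formula is proved in polar coordinates around the point: there
`2 ∂̄F / (r e^{iθ}) · r` is the sum of the radial derivative of `F`, whose integral is `-2π F(0)`, and
`i / r` times the angular derivative, whose integral over each circle is zero.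
-/

open MeasureTheory Set Metric Topology

/-! ### The operator `∂̄` and the Cauchy transform -/

/-- The Wirtinger derivative `∂F/∂z̄ = (∂F/∂x + i ∂F/∂y) / 2`. -/
noncomputable def dbar (F : ℂ → ℂ) (w : ℂ) : ℂ :=
  (fderiv ℝ F w 1 + Complex.I * fderiv ℝ F w Complex.I) / 2

/-- The Cauchy transform `z ↦ (1/π) ∫ φ(w) / (z - w) dA(w)`. -/
noncomputable def cauchyT (φ : ℂ → ℂ) (z : ℂ) : ℂ :=
  (Real.pi : ℂ)⁻¹ * ∫ w, φ w * (z - w)⁻¹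

lemma integrableOn_inv_norm : IntegrableOn (fun w : ℂ => ‖w‖⁻¹) (ball 0 1) := by
  refine (integrableOn_fun_norm_addHaar (E := ℂ) volume (f := fun y : ℝ => y⁻¹)).2 ?_
  refine (integrableOn_const (C := (1 : ℝ)) (by simp)).congr_fun ?_ measurableSet_Ioo
  intro y hy
  have := hy.1.ne'
  simp [Complex.finrank_real_complex, this]

lemma dbar_mul {F G : ℂ → ℂ} {w : ℂ} (hF : DifferentiableAt ℝ F w)
    (hG : DifferentiableAt ℝ G w) : dbar (fun z => F z * G z) w = F w * dbar G w + G w * dbar F w := by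
  unfold dbar
  have : fderiv ℝ (fun z => F z * G z) w = F w • fderiv ℝ G w + G w • fderiv ℝ F w :=
    fderiv_fun_mul hF hG
  rw [this]
  simp
  ring

lemma dbar_of_holo {F : ℂ → ℂ} {w : ℂ} (hF : DifferentiableAt ℂ F w) : dbar F w = 0 := by
  unfold dbar
  rw [hF.fderiv_restrictScalars ℝ]
  have : fderiv ℂ F w Complex.I = Complex.I * fderiv ℂ F w 1 := by
    rw [← smul_eq_mul, ← map_smul]; simp
  simp [this, ← mul_assoc]

lemma continuous_dbar {F : ℂ → ℂ} (hF : ContDiff ℝ 1 F) : Continuous (dbar F) := by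
  have := hF.continuous_fderiv one_ne_zero
  unfold dbar
  fun_prop

/-- Near the singularity the integrand is dominated by `M / ‖z - w‖`, away from it by `‖φ w‖`. -/
lemma integrable_cauchy {φ : ℂ → ℂ} {M : ℝ} (hi : Integrable φ) (hM : ∀ w, ‖φ w‖ ≤ M) (z : ℂ) :
    Integrable (fun w => φ w * (z - w)⁻¹) := by
  have h1 : Integrable ((ball (0:ℂ) 1).indicator (fun w : ℂ => ‖w‖⁻¹)) :=
    integrableOn_inv_norm.integrable_indicator measurableSet_ball
  have h2 := ((h1.comp_sub_left z).const_mul M).add hi.norm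
  refine h2.mono' (hi.1.mul (by fun_prop)) (ae_of_all _ fun w => ?_)
  simp only [norm_mul, norm_inv, Pi.add_apply]
  have hM0 : 0 ≤ M := (norm_nonneg _).trans (hM w)
  by_cases hw : z - w ∈ ball (0:ℂ) 1
  · rw [indicator_of_mem hw]
    have := mul_le_mul_of_nonneg_right (hM w) (inv_nonneg.2 (norm_nonneg (z - w)))
    have := norm_nonneg (φ w)
    linarith
  · rw [indicator_of_notMem hw]
    simp only [mem_ball, dist_zero_right, not_lt] at hw
    have := mul_le_mul_of_nonneg_left (inv_le_one_of_one_le₀ hw) (norm_nonneg (φ w))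
    linarith

/-! ### Continuity of the Cauchy transform -/

/-- A continuous truncation of the kernel `w⁻¹ = conj w / ‖w‖²`, obtained by replacing `‖w‖` in the
denominator by `max ‖w‖ (1 / (n + 1))`; it agrees with `w⁻¹` as soon as `1 / (n + 1) ≤ ‖w‖`. -/
noncomputable def trunc (n : ℕ) (w : ℂ) : ℂ :=
  (starRingEnd ℂ) w * ((max ‖w‖ (1 / ((n : ℝ) + 1)) ^ 2)⁻¹ : ℝ)

lemma trunc_aux (n : ℕ) : (0:ℝ) < 1 / ((n : ℝ) + 1) := by positivity

lemma continuous_trunc (n : ℕ) : Continuous (trunc n) := by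
  unfold trunc
  refine Complex.continuous_conj.mul (Complex.continuous_ofReal.comp (Continuous.inv₀ (by fun_prop) ?_))
  intro w
  have := (trunc_aux n).trans_le (le_max_right ‖w‖ _)
  positivity

lemma trunc_eq {n : ℕ} {w : ℂ} (h : 1 / ((n : ℝ) + 1) ≤ ‖w‖) : trunc n w = w⁻¹ := by
  unfold trunc
  rw [max_eq_left h, Complex.inv_def, Complex.normSq_eq_norm_sq]

lemma norm_trunc_le (n : ℕ) (w : ℂ) : ‖trunc n w‖ ≤ ‖w‖⁻¹ := by
  unfold trunc
  rcases eq_or_ne w 0 with rfl | hw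
  · simp
  have h0 : 0 < ‖w‖ := norm_pos_iff.2 hw
  have h1 : ‖w‖ ≤ max ‖w‖ (1 / ((n : ℝ) + 1)) := le_max_left _ _
  rw [norm_mul, Complex.norm_conj, Complex.norm_real, Real.norm_of_nonneg (by positivity)]
  calc ‖w‖ * (max ‖w‖ (1 / ((n : ℝ) + 1)) ^ 2)⁻¹ ≤ ‖w‖ * (‖w‖ ^ 2)⁻¹ := by gcongr
    _ = ‖w‖⁻¹ := by field_simp

lemma norm_trunc_le' (n : ℕ) (w : ℂ) : ‖trunc n w‖ ≤ n + 1 := by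
  by_cases h : 1 / ((n : ℝ) + 1) ≤ ‖w‖
  · refine (norm_trunc_le n w).trans (inv_le_of_inv_le₀ (by positivity) (by simpa using h))
  · push Not at h
    unfold trunc
    rw [max_eq_right h.le, norm_mul, Complex.norm_conj, Complex.norm_real,
      Real.norm_of_nonneg (by positivity)]
    calc ‖w‖ * ((1 / ((n : ℝ) + 1)) ^ 2)⁻¹ ≤ (1 / ((n : ℝ) + 1)) * ((1 / ((n : ℝ) + 1)) ^ 2)⁻¹ := by gcongr
      _ = n + 1 := by field_simp

lemma norm_diff_le (n : ℕ) (w : ℂ) :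
    ‖trunc n w - w⁻¹‖ ≤ (ball (0:ℂ) 1).indicator (fun w : ℂ => 2 * ‖w‖⁻¹) w := by
  by_cases h : 1 / ((n : ℝ) + 1) ≤ ‖w‖
  · rw [trunc_eq h]; simp only [sub_self, norm_zero]
    exact indicator_nonneg (fun _ _ => by positivity) _
  · push Not at h
    have : 1 / ((n : ℝ) + 1) ≤ 1 := by
      rw [div_le_one (by positivity)]; have := n.cast_nonneg (α := ℝ); linarith
    rw [indicator_of_mem (by simpa using h.trans_le this)]
    have := norm_trunc_le n w
    calc _ ≤ ‖trunc n w‖ + ‖w⁻¹‖ := norm_sub_le _ _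
      _ ≤ _ := by rw [norm_inv]; linarith

lemma integrable_diff_bound :
    Integrable ((ball (0:ℂ) 1).indicator (fun w : ℂ => 2 * ‖w‖⁻¹)) :=
  IntegrableOn.integrable_indicator (integrableOn_inv_norm.const_mul 2) measurableSet_ball

lemma integrable_diff (n : ℕ) : Integrable (fun w : ℂ => ‖trunc n w - w⁻¹‖) := by
  refine integrable_diff_bound.mono' ?_ (ae_of_all _ fun w => by simpa using norm_diff_le n w)
  have := (continuous_trunc n).measurable
  exact (by fun_prop : Measurable fun w : ℂ => ‖trunc n w - w⁻¹‖).aestronglyMeasurable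

/-- The truncated kernels converge to `w⁻¹` in `L¹`, by dominated convergence. -/
lemma tendsto_diff : Tendsto (fun n : ℕ => ∫ w : ℂ, ‖trunc n w - w⁻¹‖) atTop (𝓝 0) := by
  have := tendsto_integral_of_dominated_convergence (μ := (volume : Measure ℂ))
    (F := fun (n : ℕ) (w : ℂ) => ‖trunc n w - w⁻¹‖) (f := fun _ => (0:ℝ)) _
    (fun n => (integrable_diff n).1) integrable_diff_bound
    (fun n => ae_of_all _ fun w => by simpa using norm_diff_le n w)
    (ae_of_all _ fun w => ?_)
  · simpa using this
  rcases eq_or_ne w 0 with rfl | hw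
  · simp [trunc]
  refine tendsto_const_nhds.congr' ?_
  filter_upwards [(tendsto_one_div_add_atTop_nhds_zero_nat (𝕜 := ℝ)).eventually
    (ge_mem_nhds (norm_pos_iff.2 hw))] with n hn
  simp [trunc_eq hn]

/-- The convolutions of `φ` with the truncated kernels are continuous, and since `φ` is bounded they
converge uniformly to the Cauchy transform. -/
lemma continuous_cauchyT {φ : ℂ → ℂ} {M : ℝ} (hi : Integrable φ) (hM : ∀ w, ‖φ w‖ ≤ M) :
    Continuous (cauchyT φ) := by
  unfold cauchyT
  refine continuous_const.mul ?_
  have hM0 : 0 ≤ M := (norm_nonneg _).trans (hM 0)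
  have hint : ∀ n z, Integrable (fun w => φ w * trunc n (z - w)) := fun n z =>
    hi.mul_bdd (c := n + 1) (((continuous_trunc n).comp (by fun_prop)).aestronglyMeasurable)
      (ae_of_all _ fun w => norm_trunc_le' n _)
  have hc : ∀ n : ℕ, Continuous (fun z => ∫ w, φ w * trunc n (z - w)) := by
    intro n
    refine continuous_of_dominated (bound := fun w => ‖φ w‖ * (n + 1)) (fun z => (hint n z).1)
      (fun z => ae_of_all _ fun w => ?_) (hi.norm.mul_const _) (ae_of_all _ fun w => ?_)
    · rw [norm_mul]; gcongr; exact norm_trunc_le' n _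
    · exact continuous_const.mul ((continuous_trunc n).comp (by fun_prop))
  refine TendstoUniformly.continuous (F := fun n z => ∫ w, φ w * trunc n (z - w)) (p := atTop) ?_
    (Frequently.of_forall hc)
  rw [Metric.tendstoUniformly_iff]
  intro ε hε
  have ht := (tendsto_diff.const_mul M)
  rw [mul_zero] at ht
  filter_upwards [ht.eventually (gt_mem_nhds hε)] with n hn z
  refine lt_of_le_of_lt ?_ hn
  rw [dist_comm, dist_eq_norm, ← integral_sub (hint n z) (integrable_cauchy hi hM z)]
  calc _ ≤ ∫ w, M * ‖trunc n (z - w) - (z - w)⁻¹‖ := by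
        refine norm_integral_le_of_norm_le (((integrable_diff n).comp_sub_left z).const_mul M)
          (ae_of_all _ fun w => ?_)
        rw [← mul_sub, norm_mul]
        gcongr
        exact hM w
    _ = _ := by
      rw [integral_const_mul, integral_sub_left_eq_self (fun w => ‖trunc n w - w⁻¹‖)]

/-! ### Holomorphy off the support and decay at infinity -/

lemma differentiableAt_cauchyT {φ : ℂ → ℂ} {z₀ : ℂ} (hi : Integrable φ)
    (h0 : ∀ᶠ w in 𝓝 z₀, φ w = 0) : DifferentiableAt ℂ (cauchyT φ) z₀ := by
  obtain ⟨r, hr, hb⟩ := Metric.eventually_nhds_iff_ball.1 h0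
  unfold cauchyT
  refine DifferentiableAt.const_mul ?_ _
  -- Points near `z₀` stay at distance at least `r / 2` from the support of `φ`
  have hfar : ∀ w, φ w ≠ 0 → ∀ x ∈ ball z₀ (r/2), r / 2 ≤ ‖x - w‖ := by
    intro w hw x hx
    have h1 : r ≤ dist w z₀ := by
      by_contra hlt
      exact hw (hb w (by simpa using hlt))
    have h2 := dist_triangle w x z₀
    rw [mem_ball] at hx
    rw [← dist_eq_norm, dist_comm]
    linarith
  have hm : ∀ x : ℂ, AEStronglyMeasurable (fun w => φ w * (x - w)⁻¹) := fun x =>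
    hi.1.mul (by fun_prop)
  refine (hasDerivAt_integral_of_dominated_loc_of_deriv_le
    (F := fun z w => φ w * (z - w)⁻¹)
    (F' := fun z w => φ w * (-((z - w) ^ 2)⁻¹)) (bound := fun w => ‖φ w‖ * ((r/2)^2)⁻¹)
    (ball_mem_nhds z₀ (half_pos hr)) (Eventually.of_forall hm) ?_ ?_ ?_ ?_ ?_).2.differentiableAt
  · refine (hi.norm.mul_const (r/2)⁻¹).mono' (hm z₀) (ae_of_all _ fun w => ?_)
    by_cases hw : φ w = 0
    · simp [hw]
    rw [norm_mul, norm_inv]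
    gcongr
    exact hfar w hw z₀ (mem_ball_self (half_pos hr))
  · exact hi.1.mul (by fun_prop)
  · refine ae_of_all _ fun w x hx => ?_
    by_cases hw : φ w = 0
    · simp [hw]
    rw [norm_mul, norm_neg, norm_inv, norm_pow]
    gcongr
    exact hfar w hw x hx
  · exact hi.norm.mul_const _
  · refine ae_of_all _ fun w x hx => ?_
    by_cases hw : φ w = 0
    · simpa [hw] using hasDerivAt_const x (0:ℂ)
    have hne : x - w ≠ 0 := norm_pos_iff.1 ((half_pos hr).trans_le (hfar w hw x hx))
    have := (((hasDerivAt_id x).sub_const w).inv hne).const_mul (φ w)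
    simpa [neg_div] using this

lemma tendsto_cauchyT {φ : ℂ → ℂ} {R : ℝ} (hi : Integrable φ) (hR : ∀ w, R < ‖w‖ → φ w = 0) :
    Tendsto (cauchyT φ) (cocompact ℂ) (𝓝 0) := by
  unfold cauchyT
  rw [← mul_zero ((Real.pi : ℂ)⁻¹)]
  refine Tendsto.const_mul _ ?_
  have hlim : Tendsto (fun z : ℂ => (∫ w, ‖φ w‖) * (‖z‖ - R)⁻¹) (cocompact ℂ) (𝓝 0) := by
    rw [← mul_zero (∫ w, ‖φ w‖)]
    refine Tendsto.const_mul _ (tendsto_inv_atTop_zero.comp ?_)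
    exact tendsto_atTop_add_const_right _ _ (tendsto_norm_cocompact_atTop (E := ℂ))
  refine squeeze_zero_norm' ?_ hlim
  filter_upwards [(tendsto_norm_cocompact_atTop (E := ℂ)).eventually_gt_atTop R] with z hz
  rw [← integral_mul_const]
  refine norm_integral_le_of_norm_le (hi.norm.mul_const _) (ae_of_all _ fun w => ?_)
  by_cases hw : φ w = 0
  · simp [hw]
  have hwR : ‖w‖ ≤ R := not_lt.1 fun h => hw (hR w h)
  have := norm_sub_norm_le z w
  have : 0 < ‖z‖ - R := sub_pos.2 hz
  rw [norm_mul, norm_inv]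
  gcongr
  linarith

/-! ### The Cauchy–Pompeiu formula -/

/-- The point `e^{iθ}` of the unit circle, in the form used by `Complex.polarCoord`. -/
noncomputable def unitVec (θ : ℝ) : ℂ := Real.cos θ + Real.sin θ * Complex.I

lemma norm_unitVec (θ : ℝ) : ‖unitVec θ‖ = 1 := by
  simp [unitVec]

lemma continuous_unitVec : Continuous unitVec := by unfold unitVec; fun_prop

lemma hasDerivAt_unitVec (θ : ℝ) : HasDerivAt unitVec (Complex.I * unitVec θ) θ := by
  have h := ((Real.hasDerivAt_cos θ).ofReal_comp).add
    (((Real.hasDerivAt_sin θ).ofReal_comp).mul_const Complex.I)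
  refine h.congr_deriv ?_
  simp only [unitVec, Complex.ofReal_neg]
  linear_combination -(Real.sin θ : ℂ) * Complex.I_mul_I

/-- The operator `∂̄` in polar coordinates: `2 e^{-iθ} ∂̄F` is the derivative of `F` in the radial
direction `e^{iθ}` plus `i` times its derivative in the tangential direction `i e^{iθ}`. -/
lemma dbar_polar (F : ℂ → ℂ) (w : ℂ) (θ : ℝ) :
    dbar F w * (unitVec θ)⁻¹ =
      (fderiv ℝ F w (unitVec θ) + Complex.I * fderiv ℝ F w (Complex.I * unitVec θ)) / 2 := by
  have h1 : unitVec θ = Real.cos θ • (1:ℂ) + Real.sin θ • Complex.I := by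
    simp [unitVec]
  have h2 : Complex.I * unitVec θ = (-Real.sin θ) • (1:ℂ) + Real.cos θ • Complex.I := by
    simp only [unitVec, Complex.real_smul, Complex.ofReal_neg]
    linear_combination (Real.sin θ : ℂ) * Complex.I_mul_I
  have hne : unitVec θ ≠ 0 := norm_pos_iff.1 (by rw [norm_unitVec]; exact one_pos)
  have hcs : (Real.cos θ : ℂ) ^ 2 + (Real.sin θ : ℂ) ^ 2 = 1 := by
    exact_mod_cast Real.cos_sq_add_sin_sq θ
  have hA : fderiv ℝ F w (unitVec θ) =
      Real.cos θ * fderiv ℝ F w 1 + Real.sin θ * fderiv ℝ F w Complex.I := by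
    rw [h1, map_add, map_smul, map_smul]; simp
  have hB : fderiv ℝ F w (Complex.I * unitVec θ) =
      -Real.sin θ * fderiv ℝ F w 1 + Real.cos θ * fderiv ℝ F w Complex.I := by
    rw [h2, map_add, map_smul, map_smul]; simp
  rw [hA, hB, mul_inv_eq_iff_eq_mul₀ hne]
  unfold dbar unitVec
  generalize fderiv ℝ F w 1 = a
  generalize fderiv ℝ F w Complex.I = b
  generalize (Real.cos θ : ℂ) = c at *
  generalize (Real.sin θ : ℂ) = s at *
  have hI := Complex.I_mul_I
  generalize Complex.I = i at *
  linear_combination (-(a + i * b) / 2) * hcs + ((a * s ^ 2 - b * c * s) / 2) * hI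

lemma integrableOn_polar_s14 {A : ℝ × ℝ → ℂ} (hA : Continuous A) {R : ℝ}
    (h0 : ∀ r θ, R < r → A (r, θ) = 0) :
    IntegrableOn A (Ioi 0 ×ˢ Ioo (-Real.pi) Real.pi) := by
  have hK : IntegrableOn A (Icc 0 R ×ˢ Icc (-Real.pi) Real.pi) :=
    hA.continuousOn.integrableOn_compact (isCompact_Icc.prod isCompact_Icc)
  refine hK.of_forall_sdiff_eq_zero (measurableSet_Ioi.prod measurableSet_Ioo) ?_
  rintro ⟨r, θ⟩ ⟨⟨hr, hθ⟩, hn⟩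
  refine h0 r θ (not_le.1 fun hle => hn ⟨⟨le_of_lt hr, hle⟩, Ioo_subset_Icc_self hθ⟩)

/-- The Cauchy–Pompeiu formula at the origin. -/
lemma pompeiu_zero {F : ℂ → ℂ} (hF : ContDiff ℝ 1 F) (hs : HasCompactSupport F) :
    ∫ w, dbar F w * w⁻¹ = -(Real.pi * F 0) := by
  have hd : ∀ w, HasFDerivAt F (fderiv ℝ F w) w := fun w =>
    (hF.differentiable one_ne_zero w).hasFDerivAt
  have hcd : Continuous (fderiv ℝ F) := hF.continuous_fderiv one_ne_zero
  obtain ⟨R, hR0, hR⟩ : ∃ R, 0 < R ∧ ∀ w, R < ‖w‖ → F w = 0 ∧ fderiv ℝ F w = 0 := by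
    obtain ⟨R, hR0, hR⟩ := hs.isCompact.isBounded.subset_closedBall_lt 0 (0:ℂ)
    refine ⟨R, hR0, fun w hw => ?_⟩
    have hw' : w ∉ tsupport F := fun h => by
      have := hR h
      simp at this
      linarith
    exact ⟨image_eq_zero_of_notMem_tsupport hw',
      image_eq_zero_of_notMem_tsupport fun h => hw' (tsupport_fderiv_subset ℝ h)⟩
  -- `A` is the radial derivative of `F`, and `r * B` its angular derivative, at `r e^{iθ}`.
  set A : ℝ × ℝ → ℂ := fun p => fderiv ℝ F (p.1 * unitVec p.2) (unitVec p.2) with hAdef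
  set B : ℝ × ℝ → ℂ := fun p => fderiv ℝ F (p.1 * unitVec p.2) (Complex.I * unitVec p.2) with hBdef
  have hu := continuous_unitVec
  have hAc : Continuous A := by
    have : Continuous fun p : ℝ × ℝ => fderiv ℝ F (p.1 * unitVec p.2) := hcd.comp (by fun_prop)
    exact this.clm_apply (by fun_prop)
  have hBc : Continuous B := by
    have : Continuous fun p : ℝ × ℝ => fderiv ℝ F (p.1 * unitVec p.2) := hcd.comp (by fun_prop)
    exact this.clm_apply (by fun_prop)
  have hfar : ∀ r θ, R < r → R < ‖(r : ℂ) * unitVec θ‖ := by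
    intro r θ h
    rw [norm_mul, norm_unitVec, mul_one, Complex.norm_real]
    exact h.trans_le (le_abs_self r)
  have hAi := integrableOn_polar_s14 hAc (R := R) fun r θ h => by
    simp [hAdef, (hR _ (hfar r θ h)).2]
  have hBi := integrableOn_polar_s14 hBc (R := R) fun r θ h => by
    simp [hBdef, (hR _ (hfar r θ h)).2]
  have hIA : ∫ p in Ioi (0:ℝ) ×ˢ Ioo (-Real.pi) Real.pi, A p = -(2 * Real.pi * F 0) := by
    have hr : ∀ θ, ∫ r in Ioi (0:ℝ), A (r, θ) = - F 0 := by
      intro θ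
      have hder : ∀ r : ℝ, HasDerivAt (fun r : ℝ => F (r * unitVec θ)) (A (r, θ)) r := by
        intro r
        have h1 : HasDerivAt (fun r : ℝ => (r : ℂ) * unitVec θ) (unitVec θ) r := by
          simpa using (Complex.ofRealCLM.hasDerivAt (x := r)).mul_const (unitVec θ)
        exact (hd _).comp_hasDerivAt r h1
      have hev : ∀ᶠ r : ℝ in atTop, F (r * unitVec θ) = 0 := by
        filter_upwards [eventually_gt_atTop R] with r h
        exact (hR _ (hfar r θ h)).1
      have := integral_Ioi_of_hasDerivAt_of_tendsto' (a := (0:ℝ)) (m := (0:ℂ)) (fun r _ => hder r) ?_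
        (tendsto_const_nhds.congr' (hev.mono fun r h => h.symm))
      · simpa using this
      · have hc : Continuous fun r : ℝ => A (r, θ) := hAc.comp (by fun_prop)
        refine (hc.continuousOn.integrableOn_compact (isCompact_Icc (a := 0) (b := R))).of_forall_sdiff_eq_zero
          measurableSet_Ioi fun r hr => ?_
        have : R < r := not_le.1 fun h => hr.2 ⟨le_of_lt hr.1, h⟩
        simp [hAdef, (hR _ (hfar r θ this)).2]
    rw [Measure.volume_eq_prod, ← Measure.prod_restrict, integral_prod_symm _ (by
      rw [Measure.prod_restrict]; exact hAi)]
    simp_rw [hr]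
    simp [Real.pi_pos.le]
    left; ring
  have hIB : ∫ p in Ioi (0:ℝ) ×ˢ Ioo (-Real.pi) Real.pi, B p = 0 := by
    rw [Measure.volume_eq_prod, setIntegral_prod _ hBi]
    refine setIntegral_eq_zero_of_forall_eq_zero fun r hr => ?_
    have hr0 : (r : ℂ) ≠ 0 := by exact_mod_cast (ne_of_gt hr : r ≠ 0)
    have hder : ∀ θ : ℝ, HasDerivAt (fun θ : ℝ => F (r * unitVec θ)) (r * B (r, θ)) θ := by
      intro θ
      have h1 : HasDerivAt (fun θ : ℝ => (r : ℂ) * unitVec θ) (r * (Complex.I * unitVec θ)) θ :=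
        (hasDerivAt_unitVec θ).const_mul _
      have h2 := (hd _).comp_hasDerivAt θ h1
      refine h2.congr_deriv ?_
      rw [← Complex.real_smul (x := r) (z := Complex.I * unitVec θ), map_smul, Complex.real_smul]
    have hBr : Continuous fun θ : ℝ => B (r, θ) := hBc.comp (by fun_prop)
    have := intervalIntegral.integral_eq_sub_of_hasDerivAt (a := -Real.pi) (b := Real.pi)
      (fun θ _ => hder θ) ((continuous_const.mul hBr).intervalIntegrable _ _)
    have hend : unitVec (-Real.pi) = unitVec Real.pi := by simp [unitVec]
    rw [hend, sub_self, intervalIntegral.integral_const_mul] at this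
    have h3 := (mul_eq_zero.1 this).resolve_left hr0
    rw [intervalIntegral.integral_of_le (by linarith [Real.pi_pos])] at h3
    rwa [← integral_Ioc_eq_integral_Ioo]
  rw [← Complex.integral_comp_polarCoord_symm]
  have : ∀ p ∈ polarCoord.target,
      p.1 • (dbar F (Complex.polarCoord.symm p) * (Complex.polarCoord.symm p)⁻¹) =
        (1 / 2 : ℂ) * A p + (Complex.I / 2) * B p := by
    rintro ⟨r, θ⟩ ⟨hr, -⟩
    have hr0 : (r : ℂ) ≠ 0 := by exact_mod_cast (ne_of_gt hr : r ≠ 0)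
    have e : Complex.polarCoord.symm (r, θ) = r * unitVec θ := by
      simp [unitVec]
    rw [e, Complex.real_smul, mul_inv]
    have := dbar_polar F (r * unitVec θ) θ
    simp only [hAdef, hBdef]
    calc _ = ((r : ℂ) * (r : ℂ)⁻¹) * (dbar F (r * unitVec θ) * (unitVec θ)⁻¹) := by ring
      _ = _ := by rw [mul_inv_cancel₀ hr0, this]; ring
  rw [setIntegral_congr_fun polarCoord.open_target.measurableSet this]
  change ∫ p in Ioi (0:ℝ) ×ˢ Ioo (-Real.pi) Real.pi, _ = _
  rw [integral_add (hAi.const_mul _) (hBi.const_mul _), integral_const_mul, integral_const_mul,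
    hIA, hIB]
  ring

/-- The **Cauchy–Pompeiu formula**: a compactly supported `C¹` function is the Cauchy transform of
its `∂̄`-derivative. -/
lemma cauchyT_dbar {F : ℂ → ℂ} (hF : ContDiff ℝ 1 F) (hs : HasCompactSupport F) (z : ℂ) :
    cauchyT (dbar F) z = F z := by
  have h := pompeiu_zero (F := fun w => F (z + w)) (hF.comp (by fun_prop))
    (hs.comp_homeomorph (Homeomorph.addLeft z))
  have h2 : ∀ w, dbar (fun w => F (z + w)) w = dbar F (z + w) := by
    intro w; unfold dbar; rw [fderiv_comp_add_left]
  simp_rw [h2] at h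
  unfold cauchyT
  rw [← integral_add_left_eq_self _ z]
  have h3 : ∀ w, dbar F (z + w) * (z - (z + w))⁻¹ = -(dbar F (z + w) * w⁻¹) := by
    intro w
    rw [sub_add_cancel_left, inv_neg, mul_neg]
  simp_rw [h3]
  rw [integral_neg, h]
  have : (Real.pi : ℂ) ≠ 0 := by exact_mod_cast Real.pi_ne_zero
  simp [this]

/-! ### Correcting the product -/

/-- The product of a function `g`, continuous on the closure of a nonempty bounded
open set `U ⊆ ℂ` and holomorphic on `U`, with a real-`C¹` function `h`, can be
corrected by a globally continuous function `u`, holomorphic off the closure of `U`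
and vanishing at infinity, so that `g·h − u` is holomorphic on `U`. -/
theorem stmt_14 (U : Set ℂ) (hUopen : IsOpen U) (hUne : U.Nonempty)
    (hUbdd : Bornology.IsBounded U)
    (g : ℂ → ℂ) (hg : ContinuousOn g (closure U)) (hgd : DifferentiableOn ℂ g U)
    (h : ℂ → ℂ) (hh : ContDiff ℝ 1 h) :
    ∃ u : ℂ → ℂ, Continuous u ∧
      DifferentiableOn ℂ (fun z => g z * h z - u z) U ∧
      DifferentiableOn ℂ u (closure U)ᶜ ∧
      Tendsto u (cocompact ℂ) (nhds 0) := by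
  set φ : ℂ → ℂ := U.indicator fun w => g w * dbar h w with hφ
  have hcont : ContinuousOn (fun w => g w * dbar h w) (closure U) :=
    hg.mul (continuous_dbar hh).continuousOn
  have hcpt : IsCompact (closure U) := hUbdd.isCompact_closure
  have hi : Integrable φ := IntegrableOn.integrable_indicator
    ((hcont.integrableOn_compact hcpt).mono_set subset_closure) hUopen.measurableSet
  obtain ⟨M, hM⟩ : ∃ M, ∀ w, ‖φ w‖ ≤ M := by
    obtain ⟨M, hM⟩ := hcpt.exists_bound_of_continuousOn hcont
    refine ⟨max M 0, fun w => ?_⟩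
    by_cases hw : w ∈ U
    · rw [hφ, indicator_of_mem hw]
      exact (hM w (subset_closure hw)).trans (le_max_left _ _)
    · simp [hφ, indicator_of_notMem hw]
  obtain ⟨R, hR⟩ : ∃ R, ∀ w, R < ‖w‖ → φ w = 0 := by
    obtain ⟨R, hR⟩ := hUbdd.subset_closedBall (0 : ℂ)
    refine ⟨R, fun w hw => indicator_of_notMem (fun hwU => ?_) _⟩
    have := hR hwU
    rw [mem_closedBall_zero_iff] at this
    exact absurd hw (not_lt.2 this)
  refine ⟨cauchyT φ, continuous_cauchyT hi hM, fun z₀ hz₀ => ?_, fun z₀ hz₀ => ?_,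
    tendsto_cauchyT hi hR⟩
  · obtain ⟨r, hr, hrU⟩ := Metric.nhds_basis_closedBall.mem_iff.1 (hUopen.mem_nhds hz₀)
    let χ : ContDiffBump z₀ := ⟨r / 2, r, half_pos hr, half_lt_self hr⟩
    set F : ℂ → ℂ := fun z => (χ z : ℂ) * (g z * h z) with hFdef
    have hFsupp : HasCompactSupport F :=
      (χ.hasCompactSupport.comp_left (g := fun t : ℝ => (t : ℂ)) Complex.ofReal_zero).mul_right
    have hF : ContDiff ℝ 1 F := by
      rw [contDiff_iff_contDiffAt]
      intro x
      by_cases hx : x ∈ U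
      · have h1 : ContDiffAt ℝ 1 (fun z => (χ z : ℂ)) x :=
          (Complex.ofRealCLM.contDiff.comp χ.contDiff).contDiffAt
        have h2 : ContDiffAt ℝ 1 g x :=
          ((hgd.contDiffOn hUopen).contDiffAt (hUopen.mem_nhds hx)).restrict_scalars ℝ
        exact h1.mul (h2.mul hh.contDiffAt)
      · have hx' : x ∉ tsupport χ := by
          rw [χ.tsupport_eq]
          exact fun hmem => hx (hrU hmem)
        have h0 : F =ᶠ[𝓝 x] fun _ => 0 := by
          filter_upwards [notMem_tsupport_iff_eventuallyEq.1 hx'] with y hy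
          simp [hFdef, hy]
        exact contDiffAt_const.congr_of_eventuallyEq h0
    have hFz : F =ᶠ[𝓝 z₀] fun z => g z * h z := by
      filter_upwards [χ.eventuallyEq_one] with z hz
      simp [hFdef, hz]
    have hdsupp : HasCompactSupport (dbar F) := by
      refine (hFsupp.fderiv (𝕜 := ℝ)).mono fun w hw => ?_
      contrapose! hw
      simp only [Function.mem_support, not_not] at hw ⊢
      simp [dbar, hw]
    have hdi : Integrable (dbar F) :=
      (continuous_dbar hF).integrable_of_hasCompactSupport hdsupp
    obtain ⟨M', hM'⟩ := (continuous_dbar hF).bounded_above_of_compact_support hdsupp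
    -- Near `z₀` both densities equal `g ∂̄h`, because `∂̄g = 0`.
    have hψ : ∀ᶠ w in 𝓝 z₀, dbar F w - φ w = 0 := by
      filter_upwards [hFz.eventuallyEq_nhds, hUopen.mem_nhds hz₀] with w hw hwU
      have hgw := (hgd w hwU).differentiableAt (hUopen.mem_nhds hwU)
      have h1 : dbar F w = dbar (fun z => g z * h z) w := by
        simp only [dbar, hw.fderiv_eq]
      rw [h1, dbar_mul (hgw.restrictScalars ℝ) (hh.differentiable one_ne_zero w),
        dbar_of_holo hgw, hφ, indicator_of_mem hwU]
      ring
    have hsub : ∀ z, cauchyT (fun w => dbar F w - φ w) z = F z - cauchyT φ z := by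
      intro z
      rw [← cauchyT_dbar hF hFsupp z]
      unfold cauchyT
      rw [← mul_sub, ← integral_sub (integrable_cauchy hdi hM' z) (integrable_cauchy hi hM z)]
      simp_rw [sub_mul]
    refine ((differentiableAt_cauchyT (hdi.sub hi) hψ).congr_of_eventuallyEq
      ?_).differentiableWithinAt
    filter_upwards [hFz] with z hz
    rw [← hz]
    exact (hsub z).symm
  · refine (differentiableAt_cauchyT hi ?_).differentiableWithinAt
    filter_upwards [isClosed_closure.isOpen_compl.mem_nhds hz₀] with w hw
    exact indicator_of_notMem (fun hwU => hw (subset_closure hwU)) _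
end
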